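/- Assume conditions A1–A3 hold. For any p ≥ 2 there exists C_p > 0 such that for all sufficiently small ε > 0, sup_{t≥0} E|Y^ε_t|^p ≤ C_p (1 + E|ζ|^p). -/

import Mathlib

open MeasureTheory Filter
open scoped ENNReal NNReal Topology RealInnerProductSpace

set_option maxSynthPendingDepth 3

noncomputable section

namespace DiffApprox

/-- Euclidean space `ℝ^k`. -/
abbrev Vec (k : ℕ) : Type := EuclideanSpace ℝ (Fin k)

/-- `k × l` real matrices, viewed as continuous linear maps `ℝ^l → ℝ^k`. -/
abbrev Mat (k l : ℕ) : Type := Vec l →L[ℝ] Vec k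

/-- `μ` belongs to the 2-Wasserstein space `𝒫₂(ℝ^k)`. -/
def memP2 {k : ℕ} (μ : Measure (Vec k)) : Prop :=
  IsProbabilityMeasure μ ∧ (∫⁻ x, (‖x‖₊ : ℝ≥0∞) ^ (2 : ℕ) ∂μ) < ⊤

/-- `π` is a coupling of `μ` and `ν`. -/
def IsCoupling {k : ℕ} (π : Measure (Vec k × Vec k)) (μ ν : Measure (Vec k)) : Prop :=
  π.map Prod.fst = μ ∧ π.map Prod.snd = ν

/-- The 2-Wasserstein distance. -/
def W2 {k : ℕ} (μ ν : Measure (Vec k)) : ℝ :=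
  sInf {c : ℝ | ∃ π : Measure (Vec k × Vec k), IsCoupling π μ ν ∧
    c = Real.sqrt (∫ p, ‖p.1 - p.2‖ ^ (2 : ℕ) ∂π)}

/-- Trace of an endomorphism of `ℝ^k`. -/
def trCLM {k : ℕ} (A : Vec k →L[ℝ] Vec k) : ℝ :=
  LinearMap.trace ℝ (Vec k) A.toLinearMap

/-- Hilbert space adjoint (matrix transpose). -/
def adj {k l : ℕ} (A : Mat k l) : Mat l k := ContinuousLinearMap.adjoint A

/-- The outer product `(a ⊗ b) v = ⟪b, v⟫ • a`, i.e. `(a ⊗ b)_{ij} = aᵢ bⱼ`. -/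
def outer {k : ℕ} (a b : Vec k) : Mat k k := (innerSL ℝ b).smulRight a

/-- Hessian of a scalar function. -/
def hess {k : ℕ} (φ : Vec k → ℝ) (y : Vec k) : Vec k →L[ℝ] Vec k :=
  fderiv ℝ (gradient φ) y

/-- Mixed second derivative `∂²_{xy} φ`. -/
def hessMixed {k l : ℕ} (φ : Vec k → Vec l → ℝ) (x : Vec k) (y : Vec l) :
    Vec k →L[ℝ] Vec l :=
  fderiv ℝ (fun x' => gradient (φ x') y) x

/-- `C²` test function with compact support. -/
def TestFun {k : ℕ} (φ : Vec k → ℝ) : Prop :=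
  ContDiff ℝ 2 φ ∧ HasCompactSupport φ

/-- `C²` test function of two variables with compact support. -/
def TestFun2 {k l : ℕ} (φ : Vec k → Vec l → ℝ) : Prop :=
  ContDiff ℝ 2 (Function.uncurry φ) ∧ HasCompactSupport (Function.uncurry φ)

/-- Generator `L₂(x,μ)` of the frozen equation `dY = f(x,μ,Y)dt + g(x,μ,Y)dW`. -/
def genFrozen {n m d : ℕ} (f : Vec n → Measure (Vec n) → Vec m → Vec m)
    (g : Vec n → Measure (Vec n) → Vec m → Mat m d) (x : Vec n) (μ : Measure (Vec n))
    (φ : Vec m → ℝ) (y : Vec m) : ℝ :=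
  ⟪f x μ y, gradient φ y⟫ +
    (1 / 2) * trCLM (((g x μ y).comp (adj (g x μ y))).comp (hess φ y))

/-- `ν` is an invariant probability measure of the frozen equation. -/
def IsInvariantMeasure {n m d : ℕ} (f : Vec n → Measure (Vec n) → Vec m → Vec m)
    (g : Vec n → Measure (Vec n) → Vec m → Mat m d) (x : Vec n) (μ : Measure (Vec n))
    (ν : Measure (Vec m)) : Prop :=
  IsProbabilityMeasure ν ∧ ∀ φ : Vec m → ℝ, TestFun φ → ∫ y, genFrozen f g x μ φ y ∂ν = 0

/-- `M` is a martingale on `[0, ∞)` w.r.t. the filtration `ℱ`. -/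
def MartOn {Ω : Type} {mΩ : MeasurableSpace Ω} (P : Measure Ω) (ℱ : Filtration ℝ mΩ)
    (M : ℝ → Ω → ℝ) : Prop :=
  (∀ t : ℝ, 0 ≤ t → StronglyMeasurable[ℱ t] (M t) ∧ Integrable (M t) P) ∧
    ∀ s t : ℝ, 0 ≤ s → s ≤ t → P[M t|ℱ s] =ᵐ[P] M s

/-- The coefficients of the slow–fast McKean–Vlasov system. -/
structure Coeffs (n m d : ℕ) where
  b : Vec n → Measure (Vec n) → Vec m → Vec n
  K : Vec n → Measure (Vec n) → Vec m → Vec n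
  σ : Vec n → Measure (Vec n) → Vec m → Mat n d
  f : Vec n → Measure (Vec n) → Vec m → Vec m
  h : Vec n → Measure (Vec n) → Vec m → Vec m
  g : Vec n → Measure (Vec n) → Vec m → Mat m d

/-- Generator of the coupled slow–fast system `(X^ε, Y^ε)` with frozen distribution `μ`. -/
def genSF {n m d : ℕ} (C : Coeffs n m d) (ε : ℝ) (μ : Measure (Vec n))
    (φ : Vec n → Vec m → ℝ) (x : Vec n) (y : Vec m) : ℝ :=
  ⟪C.b x μ y + (Real.sqrt ε)⁻¹ • C.K x μ y, gradient (fun x' => φ x' y) x⟫ +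
    ⟪ε⁻¹ • C.f x μ y + (Real.sqrt ε)⁻¹ • C.h x μ y, gradient (φ x) y⟫ +
    (1 / 2) * trCLM (((C.σ x μ y).comp (adj (C.σ x μ y))).comp (hess (fun x' => φ x' y) x)) +
    (1 / (2 * ε)) * trCLM (((C.g x μ y).comp (adj (C.g x μ y))).comp (hess (φ x) y)) +
    (Real.sqrt ε)⁻¹ * trCLM (((C.σ x μ y).comp (adj (C.g x μ y))).comp (hessMixed φ x y))

/-- `(X, Y)` is a (weak–martingale problem) solution of the slow–fast McKean–Vlasov
system with scale parameter `ε` and initial data `(ξ, ζ)`. -/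
structure IsSFSolution {n m d : ℕ} (C : Coeffs n m d) (ε : ℝ) {Ω : Type}
    [mΩ : MeasurableSpace Ω] (P : Measure Ω) (ℱ : Filtration ℝ mΩ)
    (X : ℝ → Ω → Vec n) (Y : ℝ → Ω → Vec m) (ξ : Ω → Vec n) (ζ : Ω → Vec m) : Prop where
  measX : ∀ t, Measurable (X t)
  measY : ∀ t, Measurable (Y t)
  adaptX : Adapted ℱ X
  adaptY : Adapted ℱ Y
  initX : ∀ᵐ ω ∂P, X 0 ω = ξ ω
  initY : ∀ᵐ ω ∂P, Y 0 ω = ζ ω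
  lawP2X : ∀ t, 0 ≤ t → memP2 (P.map (X t))
  contX : ∀ ω, Continuous fun t => X t ω
  contY : ∀ ω, Continuous fun t => Y t ω
  mart : ∀ φ : Vec n → Vec m → ℝ, TestFun2 φ →
    MartOn P ℱ fun t ω =>
      φ (X t ω) (Y t ω) -
        ∫ s in Set.Ioc (0 : ℝ) t, genSF C ε (P.map (X s)) φ (X s ω) (Y s ω)

/-- Generator of a distribution dependent SDE `dX = Θ(X, ℒ_X) dt + Σ(X, ℒ_X) dW`
with `A = Σ Σ*`. -/
def genLim {n : ℕ} (Θ : Vec n → Measure (Vec n) → Vec n)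
    (A : Vec n → Measure (Vec n) → Mat n n) (μ : Measure (Vec n)) (U : Vec n → ℝ)
    (x : Vec n) : ℝ :=
  ⟪Θ x μ, gradient U x⟫ + (1 / 2) * trCLM ((A x μ).comp (hess U x))

/-- `X` is a (weak) solution of the McKean–Vlasov SDE with drift `Θ`, squared diffusion
`A = Σ Σ*` and initial datum `ξ`. -/
structure IsLimitSolution {n : ℕ} (Θ : Vec n → Measure (Vec n) → Vec n)
    (A : Vec n → Measure (Vec n) → Mat n n) {Ω : Type} [mΩ : MeasurableSpace Ω]
    (P : Measure Ω) (ℱ : Filtration ℝ mΩ) (X : ℝ → Ω → Vec n) (ξ : Ω → Vec n) : Prop where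
  measX : ∀ t, Measurable (X t)
  adaptX : Adapted ℱ X
  initX : ∀ᵐ ω ∂P, X 0 ω = ξ ω
  contX : ∀ ω, Continuous fun t => X t ω
  mart : ∀ U : Vec n → ℝ, TestFun U →
    MartOn P ℱ fun t ω =>
      U (X t ω) - ∫ s in Set.Ioc (0 : ℝ) t, genLim Θ A (P.map (X s)) U (X s ω)

/-- Generator of the synchronous coupling of two copies of the frozen equation,
driven by the same Brownian motion. -/
def genPair {n m d : ℕ} (f : Vec n → Measure (Vec n) → Vec m → Vec m)
    (g : Vec n → Measure (Vec n) → Vec m → Mat m d) (x1 : Vec n) (μ1 : Measure (Vec n))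
    (x2 : Vec n) (μ2 : Measure (Vec n)) (φ : Vec m → Vec m → ℝ) (y1 y2 : Vec m) : ℝ :=
  ⟪f x1 μ1 y1, gradient (fun z => φ z y2) y1⟫ + ⟪f x2 μ2 y2, gradient (φ y1) y2⟫ +
    (1 / 2) * trCLM (((g x1 μ1 y1).comp (adj (g x1 μ1 y1))).comp (hess (fun z => φ z y2) y1)) +
    (1 / 2) * trCLM (((g x2 μ2 y2).comp (adj (g x2 μ2 y2))).comp (hess (φ y1) y2)) +
    trCLM (((g x1 μ1 y1).comp (adj (g x2 μ2 y2))).comp (hessMixed φ y1 y2))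

/-- The uniform probability measure on `[0,1]`, a rich atomless probability space used
to define the Lions derivative by lifting to `L²`. -/
def P01 : Measure ℝ := volume.restrict (Set.Icc (0 : ℝ) 1)

/-- `D` is the Lions derivative of `u : 𝒫₂(ℝ^k) → E` at `μ`: the lift of `u` to
`L²(Ω₀; ℝ^k)` is Fréchet differentiable at every `X` with law `μ` with derivative
represented by `D ∘ X`. -/
def IsLionsDeriv {k : ℕ} {E : Type*} [NormedAddCommGroup E] [NormedSpace ℝ E]
    [CompleteSpace E] (u : Measure (Vec k) → E) (μ : Measure (Vec k))
    (D : Vec k → (Vec k →L[ℝ] E)) : Prop :=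
  ∀ X : Lp (Vec k) 2 P01, P01.map (X : ℝ → Vec k) = μ →
    ∃ L : Lp (Vec k) 2 P01 →L[ℝ] E,
      HasFDerivAt (fun Z : Lp (Vec k) 2 P01 => u (P01.map (Z : ℝ → Vec k))) L X ∧
        ∀ H : Lp (Vec k) 2 P01, L H = ∫ ω, D (X ω) (H ω) ∂P01

/-- `L²(μ)`-norm of a kernel `D`. -/
def l2n {k : ℕ} {E : Type*} [NormedAddCommGroup E] (μ : Measure (Vec k)) (D : Vec k → E) : ℝ :=
  Real.sqrt (∫ z, ‖D z‖ ^ (2 : ℕ) ∂μ)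

/-- `F(·, μ, ·) ∈ C_b^{3,3}` uniformly in `μ`:
three bounded continuous (mixed) derivatives in `(x,y)`. -/
def Cb3 {n m : ℕ} {E : Type*} [NormedAddCommGroup E] [NormedSpace ℝ E]
    (F : Vec n → Measure (Vec n) → Vec m → E) (CB : ℝ) : Prop :=
  ∀ μ : Measure (Vec n), memP2 μ →
    ContDiff ℝ 3 (fun p : Vec n × Vec m => F p.1 μ p.2) ∧
      ∀ i : ℕ, 1 ≤ i → i ≤ 3 → ∀ p : Vec n × Vec m,
        ‖iteratedFDeriv ℝ i (fun q : Vec n × Vec m => F q.1 μ q.2) p‖ ≤ CB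

/-- The Lions-derivative part of condition A3: `F` admits a Lions derivative in the
measure variable, bounded, with bounded and `γ₁`-Hölder (in `y`) derivatives. -/
def A3lions {n m : ℕ} {E : Type*} [NormedAddCommGroup E] [NormedSpace ℝ E] [CompleteSpace E]
    (F : Vec n → Measure (Vec n) → Vec m → E) (CB γ1 : ℝ) : Prop :=
  ∃ D : Vec n → Measure (Vec n) → Vec m → Vec n → (Vec n →L[ℝ] E),
    (∀ x μ y, memP2 μ → IsLionsDeriv (fun μ' => F x μ' y) μ (D x μ y)) ∧
    (∀ x μ y z, ‖D x μ y z‖ ≤ CB) ∧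
    (∀ x μ y z, ‖fderiv ℝ (D x μ y) z‖ ≤ CB) ∧
    (∀ x μ y1 y2 z,
      ‖fderiv ℝ (D x μ y1) z - fderiv ℝ (D x μ y2) z‖ ≤ CB * ‖y1 - y2‖ ^ γ1) ∧
    (∀ x μ z y, ‖fderiv ℝ (fun y' => D x μ y' z) y‖ ≤ CB) ∧
    (∀ x μ z y1 y2,
      ‖fderiv ℝ (fun y' => D x μ y' z) y1 - fderiv ℝ (fun y' => D x μ y' z) y2‖ ≤
        CB * ‖y1 - y2‖ ^ γ1)

/-- Conditions A1–A3 of the paper for the coefficients of the slow–fast system. -/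
structure SA13 {n m d : ℕ} (C : Coeffs n m d) where
  CL : ℝ
  γ : ℝ
  hγ : 0 < γ
  ς : ℝ
  hς : ς ∈ Set.Ioo (0 : ℝ) 1
  CG : ℝ
  CB : ℝ
  γ1 : ℝ
  hγ1 : γ1 ∈ Set.Ioc (0 : ℝ) 1
  lipSlow : ∀ x1 x2 μ1 μ2 y1 y2, memP2 μ1 → memP2 μ2 →
    ‖C.b x1 μ1 y1 - C.b x2 μ2 y2‖ + ‖C.K x1 μ1 y1 - C.K x2 μ2 y2‖ +
        ‖C.σ x1 μ1 y1 - C.σ x2 μ2 y2‖ ≤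
      CL * (‖x1 - x2‖ + ‖y1 - y2‖ + W2 μ1 μ2)
  lipFast : ∀ x1 x2 μ1 μ2 y1 y2, memP2 μ1 → memP2 μ2 →
    ‖C.f x1 μ1 y1 - C.f x2 μ2 y2‖ + ‖C.h x1 μ1 y1 - C.h x2 μ2 y2‖ +
        ‖C.g x1 μ1 y1 - C.g x2 μ2 y2‖ ≤
      CL * (‖x1 - x2‖ + ‖y1 - y2‖ + W2 μ1 μ2)
  dissip : ∀ x μ y1 y2, memP2 μ →
    2 * ⟪C.f x μ y1 - C.f x μ y2, y1 - y2⟫ + ‖C.g x μ y1 - C.g x μ y2‖ ^ (2 : ℕ) ≤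
      -γ * ‖y1 - y2‖ ^ (2 : ℕ)
  growth : ∀ x μ y, memP2 μ →
    ‖C.K x μ y‖ + ‖C.f x μ y‖ + ‖C.h x μ y‖ + ‖C.σ x μ y‖ ≤ CG * (1 + ‖y‖)
  growthg : ∀ x μ y, memP2 μ → ‖C.g x μ y‖ ≤ CG * (1 + ‖y‖ ^ ς)
  smoothK : Cb3 C.K CB
  smoothf : Cb3 C.f CB
  smoothg : Cb3 C.g CB
  lionsK : A3lions C.K CB γ1
  lionsf : A3lions C.f CB γ1
  lionsg : A3lions C.g CB γ1

/-- Conditions A1–A4 of the paper, together with the invariant measures `ν^{x,μ}` of the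
frozen equation and the solution `Φ` of the Poisson equation `-L₂(x,μ)Φ = K`. -/
structure SA {n m d : ℕ} (C : Coeffs n m d) extends SA13 C where
  ν : Vec n → Measure (Vec n) → Measure (Vec m)
  Φ : Vec n → Measure (Vec n) → Vec m → Vec n
  invν : ∀ x μ, memP2 μ → IsInvariantMeasure C.f C.g x μ (ν x μ)
  uniqν : ∀ x μ, memP2 μ → ∀ ν' : Measure (Vec m), IsInvariantMeasure C.f C.g x μ ν' →
    ν' = ν x μ
  centering : ∀ x μ, memP2 μ → ∫ y, C.K x μ y ∂(ν x μ) = 0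
  smoothΦ : ∀ μ, memP2 μ → ContDiff ℝ 3 fun p : Vec n × Vec m => Φ p.1 μ p.2
  poisson : ∀ x μ y (i : Fin n), memP2 μ →
    genFrozen C.f C.g x μ (fun y' => Φ x μ y' i) y = -(C.K x μ y i)

/-- The matrix-valued map `(∂_y Φ) g`. -/
def dyPhiG {n m d : ℕ} (Φ : Vec n → Measure (Vec n) → Vec m → Vec n)
    (g : Vec n → Measure (Vec n) → Vec m → Mat m d) (x : Vec n) (μ : Measure (Vec n))
    (y : Vec m) : Mat n d :=
  (fderiv ℝ (fun y' => Φ x μ y') y).comp (g x μ y)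

/-- Averaged drift `Θ(x,μ) = (b + ∂ₓΦ_K + ∂_yΦ_h + Tr[∂²_{xy}Φ_{σg*}])‾(x,μ)`. -/
def Theta {n m d : ℕ} (C : Coeffs n m d) (ν : Vec n → Measure (Vec n) → Measure (Vec m))
    (Φ : Vec n → Measure (Vec n) → Vec m → Vec n) (x : Vec n) (μ : Measure (Vec n)) :
    Vec n :=
  ∫ y,
    (C.b x μ y + fderiv ℝ (fun x' => Φ x' μ y) x (C.K x μ y) +
      fderiv ℝ (fun y' => Φ x μ y') y (C.h x μ y) +
      (EuclideanSpace.equiv (Fin n) ℝ).symm fun i =>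
        trCLM (((C.σ x μ y).comp (adj (C.g x μ y))).comp
          (fderiv ℝ (fun x' => gradient (fun y' => Φ x' μ y' i) y) x)))
    ∂(ν x μ)

/-- Averaged squared diffusion
`((K⊗Φ) + (K⊗Φ)* + (σg*)∂_yΦ + [(σg*)∂_yΦ]* + σσ*)‾(x,μ)`. -/
def AMat1 {n m d : ℕ} (C : Coeffs n m d) (ν : Vec n → Measure (Vec n) → Measure (Vec m))
    (Φ : Vec n → Measure (Vec n) → Vec m → Vec n) (x : Vec n) (μ : Measure (Vec n)) :
    Mat n n :=
  ∫ y,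
    (outer (C.K x μ y) (Φ x μ y) + adj (outer (C.K x μ y) (Φ x μ y)) +
      ((C.σ x μ y).comp (adj (C.g x μ y))).comp (adj (fderiv ℝ (fun y' => Φ x μ y') y)) +
      adj (((C.σ x μ y).comp (adj (C.g x μ y))).comp
        (adj (fderiv ℝ (fun y' => Φ x μ y') y))) +
      (C.σ x μ y).comp (adj (C.σ x μ y)))
    ∂(ν x μ)

/-- Averaged squared diffusion `((∂_yΦ_g + σ)(∂_yΦ_g + σ)*)‾(x,μ)`. -/
def AMat2 {n m d : ℕ} (C : Coeffs n m d) (ν : Vec n → Measure (Vec n) → Measure (Vec m))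
    (Φ : Vec n → Measure (Vec n) → Vec m → Vec n) (x : Vec n) (μ : Measure (Vec n)) :
    Mat n n :=
  ∫ y, ((dyPhiG Φ C.g x μ y + C.σ x μ y).comp (adj (dyPhiG Φ C.g x μ y + C.σ x μ y)))
    ∂(ν x μ)

/-- `A` is a symmetric positive semi-definite matrix. -/
def IsPSD {k : ℕ} (A : Mat k k) : Prop :=
  adj A = A ∧ ∀ v : Vec k, 0 ≤ ⟪A v, v⟫

instance instPathMeasurableSpace {α E : Type*} [TopologicalSpace α] [TopologicalSpace E] :
    MeasurableSpace C(α, E) := borel _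

/-- The path `t ↦ X t ω` on `[0,T]`, as an element of `C([0,T]; ℝ^k)`
(junk value if the path is not continuous). -/
def pathOf {Ω : Type} {k : ℕ} (X : ℝ → Ω → Vec k) (T : ℝ) (ω : Ω) :
    C(Set.Icc (0 : ℝ) T, Vec k) := by
  classical
  exact if h : Continuous fun t : ℝ => X t ω then
    ⟨fun t => X t.1 ω, h.comp continuous_subtype_val⟩
  else 0

/-- A family of measures is (uniformly) tight. -/
def TightFamily {α : Type*} [TopologicalSpace α] [MeasurableSpace α]
    (S : Set (Measure α)) : Prop :=
  ∀ δ : ℝ, 0 < δ → ∃ Kc : Set α, IsCompact Kc ∧ ∀ μ ∈ S, μ Kcᶜ ≤ ENNReal.ofReal δ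

/-- The frozen equation `dY_t = f(x,μ,Y_t) dt + g(x,μ,Y_t) dW_t` under conditions A1–A2:
`Y x μ y` is its solution starting from `y` (weak/martingale-problem formulation, with the
synchronous coupling of any two copies recorded via `martPair`), and `ν x μ` is its unique
invariant probability measure. -/
structure FrozenSetting (n m d : ℕ) (Ω : Type) [mΩ : MeasurableSpace Ω] (P : Measure Ω)
    (ℱ : Filtration ℝ mΩ) where
  f : Vec n → Measure (Vec n) → Vec m → Vec m
  g : Vec n → Measure (Vec n) → Vec m → Mat m d
  CL : ℝ
  γ : ℝ
  hγ : 0 < γ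
  ς : ℝ
  hς : ς ∈ Set.Ioo (0 : ℝ) 1
  CG : ℝ
  probP : IsProbabilityMeasure P
  lip : ∀ x1 x2 μ1 μ2 y1 y2, memP2 μ1 → memP2 μ2 →
    ‖f x1 μ1 y1 - f x2 μ2 y2‖ + ‖g x1 μ1 y1 - g x2 μ2 y2‖ ≤
      CL * (‖x1 - x2‖ + ‖y1 - y2‖ + W2 μ1 μ2)
  dissip : ∀ x μ y1 y2, memP2 μ →
    2 * ⟪f x μ y1 - f x μ y2, y1 - y2⟫ + ‖g x μ y1 - g x μ y2‖ ^ (2 : ℕ) ≤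
      -γ * ‖y1 - y2‖ ^ (2 : ℕ)
  growthf : ∀ x μ y, memP2 μ → ‖f x μ y‖ ≤ CG * (1 + ‖y‖)
  growthg : ∀ x μ y, memP2 μ → ‖g x μ y‖ ≤ CG * (1 + ‖y‖ ^ ς)
  Y : Vec n → Measure (Vec n) → Vec m → ℝ → Ω → Vec m
  measY : ∀ x μ y t, Measurable (Y x μ y t)
  initY : ∀ x μ y ω, Y x μ y 0 ω = y
  contY : ∀ x μ y ω, Continuous fun t => Y x μ y t ω
  mart : ∀ x μ y, memP2 μ → ∀ φ : Vec m → ℝ, TestFun φ →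
    MartOn P ℱ fun t ω =>
      φ (Y x μ y t ω) - ∫ s in Set.Ioc (0 : ℝ) t, genFrozen f g x μ φ (Y x μ y s ω)
  martPair : ∀ x1 μ1 y1 x2 μ2 y2, memP2 μ1 → memP2 μ2 → ∀ φ : Vec m → Vec m → ℝ,
    TestFun2 φ →
    MartOn P ℱ fun t ω =>
      φ (Y x1 μ1 y1 t ω) (Y x2 μ2 y2 t ω) -
        ∫ s in Set.Ioc (0 : ℝ) t,
          genPair f g x1 μ1 x2 μ2 φ (Y x1 μ1 y1 s ω) (Y x2 μ2 y2 s ω)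
  ν : Vec n → Measure (Vec n) → Measure (Vec m)
  invν : ∀ x μ, memP2 μ → IsInvariantMeasure f g x μ (ν x μ)
  uniqν : ∀ x μ, memP2 μ → ∀ ν' : Measure (Vec m), IsInvariantMeasure f g x μ ν' →
    ν' = ν x μ

/-- `Φ(x,μ,y) = ∫_0^∞ E[K(x, μ, Y_t^{x,μ,y})] dt`, the solution of the Poisson equation. -/
def PoissonPhi {n m d : ℕ} {Ω : Type} [mΩ : MeasurableSpace Ω] {P : Measure Ω}
    {ℱ : Filtration ℝ mΩ} (FS : FrozenSetting n m d Ω P ℱ)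
    (K : Vec n → Measure (Vec n) → Vec m → Vec n) (x : Vec n) (μ : Measure (Vec n))
    (y : Vec m) : Vec n :=
  ∫ t in Set.Ioi (0 : ℝ), (∫ ω, K x μ (FS.Y x μ y t ω) ∂P)

/-- Conditions A1–A4 for the coefficient `K` (relative to a frozen fast dynamics):
Lipschitz continuity, linear growth, the regularity condition A3 for `K, f, g`,
and the centering condition A4. -/
structure KAssumptions {n m d : ℕ} {Ω : Type} [mΩ : MeasurableSpace Ω] {P : Measure Ω}
    {ℱ : Filtration ℝ mΩ} (FS : FrozenSetting n m d Ω P ℱ)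
    (K : Vec n → Measure (Vec n) → Vec m → Vec n) where
  CK : ℝ
  CB : ℝ
  γ1 : ℝ
  hγ1 : γ1 ∈ Set.Ioc (0 : ℝ) 1
  lip : ∀ x1 x2 μ1 μ2 y1 y2, memP2 μ1 → memP2 μ2 →
    ‖K x1 μ1 y1 - K x2 μ2 y2‖ ≤ CK * (‖x1 - x2‖ + ‖y1 - y2‖ + W2 μ1 μ2)
  growth : ∀ x μ y, memP2 μ → ‖K x μ y‖ ≤ CK * (1 + ‖y‖)
  smoothK : Cb3 K CB
  lionsK : A3lions K CB γ1
  smoothf : Cb3 FS.f CB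
  lionsf : A3lions FS.f CB γ1
  smoothg : Cb3 FS.g CB
  lionsg : A3lions FS.g CB γ1
  centering : ∀ x μ, memP2 μ → ∫ y, K x μ y ∂(FS.ν x μ) = 0

end DiffApprox
namespace DiffApprox

/-!
Let `V y = (1 + |y|²)^{p/2}`. Dissipativity of `f, g`, the linear growth of `h` with the small
factor `√ε`, and the sublinear growth of `g` make `V` a Foster–Lyapunov function: the fast part of
the generator satisfies `L V ≤ ε⁻¹ (A - c V)`, with `A` and `c` independent of `ε`, of the slow
position and of its law. Truncating `V` by a concave function preserves the inequality up to the
factor `plateau`, so Dynkin's formula applies to compactly supported test functions; letting the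
truncation level tend to infinity, `U t = E V(Y_t)` satisfies
`U t - U s ≤ ∫ ε⁻¹ (A - c U)` over `(s, t]`, and the level `max (U 0) (A / c)` is a barrier for `U`.

Dynkin's formula needs the drift `b (0, μ_s, 0)` to be integrable in time, and this can fail from
some time `τ` on. But then the time integrals in the martingale problem take the junk value `0`
after `τ`, for test functions detecting the drift near the current position, so that these test
functions of the process are martingales without compensator. This forces `(X, Y)` to stay at its
position at time `τ`, where Fatou's lemma gives the same bound.
-/

/-! ### Integrals, Fatou's lemma and an integral barrier -/

section Integrals

variable {α : Type*} [MeasurableSpace α] {μ : Measure α}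

theorem integral_le_const_mul_univ [IsFiniteMeasure μ] {f : α → ℝ} {K : ℝ} (hK : 0 ≤ K)
    (hf : ∀ᵐ a ∂μ, f a ≤ K) : ∫ a, f a ∂μ ≤ K * μ.real Set.univ := by
  by_cases hi : Integrable f μ
  · simpa [mul_comm] using integral_mono_ae hi (integrable_const K) hf
  · rw [integral_undef hi]
    positivity

theorem setIntegral_Ioc_le_const {f : ℝ → ℝ} {K s t : ℝ} (hK : 0 ≤ K) (hst : s ≤ t)
    (hf : ∀ r ∈ Set.Ioc s t, f r ≤ K) : ∫ r in Set.Ioc s t, f r ≤ K * (t - s) := by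
  simpa [hst] using integral_le_const_mul_univ (μ := volume.restrict (Set.Ioc s t)) hK
    ((ae_restrict_mem measurableSet_Ioc).mono hf)

theorem integrable_and_integral_le_of_tendsto {F : ℕ → α → ℝ} {f : α → ℝ} {A : ℝ}
    (hF : ∀ k, Integrable (F k) μ) (hF0 : ∀ k a, 0 ≤ F k a) (hA : ∀ k, ∫ a, F k a ∂μ ≤ A)
    (hlim : ∀ᵐ a ∂μ, Tendsto (fun k => F k a) atTop (𝓝 (f a))) :
    Integrable f μ ∧ ∫ a, f a ∂μ ≤ A := by
  have hfm : AEStronglyMeasurable f μ :=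
    aestronglyMeasurable_of_tendsto_ae atTop (fun k => (hF k).aestronglyMeasurable) hlim
  have hf0 : 0 ≤ᵐ[μ] f := hlim.mono fun a ha => ge_of_tendsto' ha fun k => hF0 k a
  have hA0 : 0 ≤ A := (integral_nonneg (hF0 0)).trans (hA 0)
  have hle : ∫⁻ a, ENNReal.ofReal (f a) ∂μ ≤ ENNReal.ofReal A := by
    calc ∫⁻ a, ENNReal.ofReal (f a) ∂μ
        = ∫⁻ a, liminf (fun k => ENNReal.ofReal (F k a)) atTop ∂μ :=
          lintegral_congr_ae (hlim.mono fun a ha =>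
            ((ENNReal.continuous_ofReal.tendsto _).comp ha).liminf_eq.symm)
      _ ≤ liminf (fun k => ∫⁻ a, ENNReal.ofReal (F k a) ∂μ) atTop :=
          lintegral_liminf_le' fun k => (hF k).aestronglyMeasurable.aemeasurable.ennreal_ofReal
      _ ≤ liminf (fun _ : ℕ => ENNReal.ofReal A) atTop := by
          refine liminf_le_liminf (Eventually.of_forall fun k => ?_)
          rw [← ofReal_integral_eq_lintegral_ofReal (hF k) (ae_of_all _ (hF0 k))]
          exact ENNReal.ofReal_le_ofReal (hA k)
      _ = ENNReal.ofReal A := by simp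
  have hi : Integrable f μ :=
    ⟨hfm, by rw [hasFiniteIntegral_iff_ofReal hf0]; exact hle.trans_lt ENNReal.ofReal_lt_top⟩
  rw [← ofReal_integral_eq_lintegral_ofReal hi hf0] at hle
  exact ⟨hi, (ENNReal.ofReal_le_ofReal_iff hA0).1 hle⟩

end Integrals

theorem le_of_sub_le_integral_mul_sub {U : ℝ → ℝ} {κ A c K T : ℝ} (hκ : 0 ≤ κ) (hA : 0 ≤ A)
    (hc : 0 < c) (hT : 0 ≤ T) (hU : ∀ r ∈ Set.Icc 0 T, 0 ≤ U r) (h0 : U 0 ≤ K) (hK : A ≤ c * K)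
    (hint : ∀ s t, 0 ≤ s → s ≤ t → t ≤ T → U t - U s ≤ ∫ r in Set.Ioc s t, κ * (A - c * U r)) :
    U T ≤ K := by
  have hlin : ∀ s t, 0 ≤ s → s ≤ t → t ≤ T → U t ≤ U s + κ * A * (t - s) := by
    intro s t hs hst ht
    have hbound : ∫ r in Set.Ioc s t, κ * (A - c * U r) ≤ κ * A * (t - s) := by
      refine setIntegral_Ioc_le_const (by positivity) hst fun r hr => ?_
      have := hU r ⟨hs.trans hr.1.le, hr.2.trans ht⟩
      gcongr
      exact sub_le_self _ (by positivity)
    linarith [hint s t hs hst ht]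
  set S : Set ℝ := {s ∈ Set.Icc 0 T | U s ≤ K}
  have h0S : (0 : ℝ) ∈ S := ⟨⟨le_rfl, hT⟩, h0⟩
  have hSb : BddAbove S := ⟨T, fun s hs => hs.1.2⟩
  have h0s : 0 ≤ sSup S := le_csSup hSb h0S
  have hsT : sSup S ≤ T := csSup_le ⟨0, h0S⟩ fun s hs => hs.1.2
  -- Past the last time below `K` the drift is nonpositive.
  have hafter : U T ≤ U (sSup S) := by
    refine sub_nonpos.1 ((hint _ _ h0s hsT le_rfl).trans
      (setIntegral_nonpos measurableSet_Ioc fun r hr => ?_))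
    have hKr : K < U r := by
      by_contra! hr'
      exact hr.1.not_ge (le_csSup hSb ⟨⟨h0s.trans hr.1.le, hr.2⟩, hr'⟩)
    exact mul_nonpos_of_nonneg_of_nonpos hκ (by nlinarith)
  obtain ⟨u, -, -, hulim, huS⟩ :=
    (isLUB_csSup ⟨0, h0S⟩ hSb).exists_seq_monotone_tendsto ⟨0, h0S⟩
  have hlim : Tendsto (fun k => K + κ * A * (sSup S - u k)) atTop (𝓝 K) := by
    simpa using ((hulim.const_sub (sSup S)).const_mul (κ * A)).const_add K
  refine hafter.trans (ge_of_tendsto' hlim fun k => ?_)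
  linarith [hlin _ _ (huS k).1.1 (le_csSup hSb (huS k)) hsT, (huS k).2]

/-! ### Wasserstein distance and measurability in time -/

section Wasserstein

variable {k n m : ℕ} {E : Type*} [NormedAddCommGroup E]

theorem W2_nonneg (μ ν : Measure (Vec k)) : 0 ≤ W2 μ ν := by
  apply Real.sInf_nonneg
  rintro c ⟨π, -, rfl⟩
  exact Real.sqrt_nonneg _

theorem W2_map_le {Ω : Type*} [MeasurableSpace Ω] (P : Measure Ω) {U V : Ω → Vec k}
    (hU : Measurable U) (hV : Measurable V) :
    W2 (P.map U) (P.map V) ≤ √(∫ ω, ‖U ω - V ω‖ ^ (2 : ℕ) ∂P) := by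
  refine csInf_le ⟨0, ?_⟩ ⟨P.map fun ω => (U ω, V ω), ⟨?_, ?_⟩, ?_⟩
  · rintro c ⟨π, -, rfl⟩
    exact Real.sqrt_nonneg _
  · exact Measure.map_map measurable_fst (hU.prodMk hV)
  · exact Measure.map_map measurable_snd (hU.prodMk hV)
  · rw [integral_map (hU.prodMk hV).aemeasurable (by fun_prop)]

theorem W2_self_le (μ : Measure (Vec k)) : W2 μ μ ≤ 0 := by
  simpa using W2_map_le μ measurable_id measurable_id

theorem tendsto_W2_map {ι Ω : Type*} [MeasurableSpace Ω] {P : Measure Ω} {l : Filter ι}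
    [l.IsCountablyGenerated] {U : ι → Ω → Vec k} {V : Ω → Vec k} {B : Ω → ℝ}
    (hU : ∀ i, Measurable (U i)) (hV : Measurable V) (hB : Integrable (fun ω => B ω ^ 2) P)
    (hUB : ∀ i ω, ‖U i ω - V ω‖ ≤ B ω) (hlim : ∀ ω, Tendsto (U · ω) l (𝓝 (V ω))) :
    Tendsto (fun i => W2 (P.map (U i)) (P.map V)) l (𝓝 0) := by
  have hsq : Tendsto (fun i => ∫ ω, ‖U i ω - V ω‖ ^ 2 ∂P) l (𝓝 (∫ _, (0 : ℝ) ∂P)) := by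
    refine tendsto_integral_filter_of_dominated_convergence (fun ω => B ω ^ 2)
      (Eventually.of_forall fun i => (((hU i).sub hV).norm.pow_const 2).aestronglyMeasurable)
      (Eventually.of_forall fun i => ae_of_all _ fun ω => ?_) hB (ae_of_all _ fun ω => ?_)
    · rw [norm_pow, norm_norm]
      gcongr
      exact hUB i ω
    · simpa using (tendsto_iff_norm_sub_tendsto_zero.1 (hlim ω)).pow 2
  exact squeeze_zero (fun i => W2_nonneg _ _) (fun i => W2_map_le P (hU i) hV)
    (by simpa using hsq.sqrt)

theorem memP2_map_of_bounded {Ω : Type*} [MeasurableSpace Ω] (P : Measure Ω)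
    [IsProbabilityMeasure P] {U : Ω → Vec k} (hU : Measurable U) {c : ℝ}
    (hc : ∀ ω, ‖U ω‖ ≤ c) : memP2 (P.map U) := by
  refine ⟨Measure.isProbabilityMeasure_map hU.aemeasurable, ?_⟩
  rw [lintegral_map (by fun_prop) hU]
  calc ∫⁻ ω, (‖U ω‖₊ : ℝ≥0∞) ^ (2 : ℕ) ∂P ≤ ∫⁻ _, ENNReal.ofReal c ^ 2 ∂P := by
        refine lintegral_mono fun ω => ?_
        gcongr
        exact (ofReal_norm (U ω)).symm.trans_le (ENNReal.ofReal_le_ofReal (hc ω))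
    _ < ⊤ := by simp

theorem memP2.integrable_norm_sq {Ω : Type*} [MeasurableSpace Ω] {P : Measure Ω}
    {U : Ω → Vec k} (h : memP2 (P.map U)) (hU : Measurable U) :
    Integrable (fun ω => ‖U ω‖ ^ 2) P := by
  have hfin := h.2
  rw [lintegral_map (by fun_prop) hU] at hfin
  refine ⟨(hU.norm.pow_const 2).aestronglyMeasurable, ?_⟩
  simpa [HasFiniteIntegral, enorm_eq_nnnorm] using hfin

/-- A continuous truncation of the identity: `softTrunc r x → x` as `r → 0`, while
`softTrunc r` takes values in the ball of radius `r⁻¹`. -/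
def softTrunc (r : ℝ) (x : Vec k) : Vec k := (1 + r * ‖x‖)⁻¹ • x

theorem continuous_softTrunc {r : ℝ} (hr : 0 ≤ r) : Continuous (softTrunc r : Vec k → Vec k) := by
  have hpos : ∀ x : Vec k, 1 + r * ‖x‖ ≠ 0 := fun x => by positivity
  unfold softTrunc
  fun_prop (disch := assumption)

theorem norm_softTrunc_le {r : ℝ} (hr : 0 < r) (x : Vec k) : ‖softTrunc r x‖ ≤ r⁻¹ := by
  rw [softTrunc, norm_smul, Real.norm_of_nonneg (by positivity), inv_mul_le_iff₀ (by positivity),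
    ← div_eq_mul_inv, le_div_iff₀ hr]
  linarith

theorem norm_softTrunc_sub_le {r : ℝ} (hr : 0 ≤ r) (x : Vec k) : ‖softTrunc r x - x‖ ≤ ‖x‖ := by
  have h0 : 0 ≤ (1 + r * ‖x‖)⁻¹ := by positivity
  have h1 : (1 + r * ‖x‖)⁻¹ ≤ 1 :=
    inv_le_one_of_one_le₀ (by linarith [mul_nonneg hr (norm_nonneg x)])
  calc ‖softTrunc r x - x‖ = |(1 + r * ‖x‖)⁻¹ - 1| * ‖x‖ := by
        rw [softTrunc, ← Real.norm_eq_abs, ← norm_smul, sub_smul, one_smul]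
    _ ≤ 1 * ‖x‖ := by
        gcongr
        exact abs_le.2 ⟨by linarith, by linarith⟩
    _ = ‖x‖ := one_mul _

theorem tendsto_softTrunc (x : Vec k) :
    Tendsto (fun N : ℕ => softTrunc (1 / ((N : ℝ) + 1)) x) atTop (𝓝 x) := by
  have h : ContinuousAt (fun r : ℝ => softTrunc r x) 0 := by
    unfold softTrunc
    fun_prop (disch := simp)
  simpa [softTrunc, Function.comp_def] using h.tendsto.comp tendsto_one_div_add_atTop_nhds_zero_nat

/-- Joint Lipschitz continuity in `(x, μ, y)`, with the distance `W2` in the measure variable. -/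
def LipCoeff (F : Vec n → Measure (Vec n) → Vec m → E) (c : ℝ) : Prop :=
  ∀ x₁ x₂ μ₁ μ₂ y₁ y₂, memP2 μ₁ → memP2 μ₂ →
    ‖F x₁ μ₁ y₁ - F x₂ μ₂ y₂‖ ≤ c * (‖x₁ - x₂‖ + ‖y₁ - y₂‖ + W2 μ₁ μ₂)

theorem LipCoeff.tendsto {ι : Type*} {l : Filter ι} {F : Vec n → Measure (Vec n) → Vec m → E}
    {c : ℝ} (hF : LipCoeff F c) {x : ι → Vec n} {x₀ : Vec n} {μ : ι → Measure (Vec n)}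
    {μ₀ : Measure (Vec n)} {y : ι → Vec m} {y₀ : Vec m} (hμ : ∀ i, memP2 (μ i)) (hμ₀ : memP2 μ₀)
    (hx : Tendsto x l (𝓝 x₀)) (hW : Tendsto (fun i => W2 (μ i) μ₀) l (𝓝 0))
    (hy : Tendsto y l (𝓝 y₀)) : Tendsto (fun i => F (x i) (μ i) (y i)) l (𝓝 (F x₀ μ₀ y₀)) := by
  rw [tendsto_iff_norm_sub_tendsto_zero] at hx hy ⊢
  refine squeeze_zero (fun i => norm_nonneg _) (fun i => hF _ _ _ _ _ _ (hμ i) hμ₀) ?_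
  simpa using ((hx.add hy).add hW).const_mul c

theorem LipCoeff.norm_sub_zero_le {F : Vec n → Measure (Vec n) → Vec m → E} {c : ℝ}
    (hF : LipCoeff F c) {μ : Measure (Vec n)} (hμ : memP2 μ) (x : Vec n) (y : Vec m) :
    ‖F x μ y - F 0 μ 0‖ ≤ |c| * (‖x‖ + ‖y‖) := by
  have h := hF x 0 μ μ y 0 hμ hμ
  rw [le_antisymm (W2_self_le μ) (W2_nonneg μ μ), sub_zero, sub_zero, add_zero] at h
  exact h.trans (by gcongr; exact le_abs_self c)

-- The law of `X s` need not be `W2`-continuous in `s`; that of a bounded truncation is.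
theorem LipCoeff.aestronglyMeasurable_path {F : Vec n → Measure (Vec n) → Vec m → E} {c : ℝ}
    (hF : LipCoeff F c) {Ω : Type*} [MeasurableSpace Ω] {P : Measure Ω} [IsProbabilityMeasure P]
    {X : ℝ → Ω → Vec n} (hX : ∀ t, Measurable (X t)) (hXc : ∀ ω, Continuous fun t => X t ω)
    (hXP : ∀ t, 0 ≤ t → memP2 (P.map (X t))) {x : ℝ → Vec n} {y : ℝ → Vec m}
    (hx : Continuous x) (hy : Continuous y) (t : ℝ) :
    AEStronglyMeasurable (fun s => F (x s) (P.map (X s)) (y s))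
      (volume.restrict (Set.Ioc 0 t)) := by
  set r : ℕ → ℝ := fun N => 1 / ((N : ℝ) + 1)
  have hr : ∀ N, 0 < r N := fun N => by positivity
  have hcont : ∀ N, Continuous (softTrunc (r N) : Vec n → Vec n) := fun N =>
    continuous_softTrunc (hr N).le
  have hmeas : ∀ N s, Measurable fun ω => softTrunc (r N) (X s ω) := fun N s =>
    (hcont N).measurable.comp (hX s)
  have hmem : ∀ N s, memP2 (P.map fun ω => softTrunc (r N) (X s ω)) := fun N s =>
    memP2_map_of_bounded P (hmeas N s) fun ω => norm_softTrunc_le (hr N) _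
  have htrunc : ∀ N, Continuous fun s => F (x s) (P.map fun ω => softTrunc (r N) (X s ω)) (y s) :=
    fun N => continuous_iff_continuousAt.2 fun s =>
      hF.tendsto (hmem N) (hmem N s) (hx.tendsto s)
        (tendsto_W2_map (hmeas N) (hmeas N s) (integrable_const ((2 * (r N)⁻¹) ^ 2))
          (fun i ω => (norm_sub_le _ _).trans (by
            linarith [norm_softTrunc_le (hr N) (X i ω), norm_softTrunc_le (hr N) (X s ω)]))
          fun ω => ((hcont N).comp (hXc ω)).tendsto s)
        (hy.tendsto s)
  refine aestronglyMeasurable_of_tendsto_ae atTop (fun N => (htrunc N).aestronglyMeasurable)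
    ((ae_restrict_mem measurableSet_Ioc).mono fun s hs => ?_)
  have hs : memP2 (P.map (X s)) := hXP s hs.1.le
  exact hF.tendsto (fun N => hmem N s) hs tendsto_const_nhds
    (tendsto_W2_map (fun N => hmeas N s) (hX s) (hs.integrable_norm_sq (hX s))
      (fun N ω => norm_softTrunc_sub_le (hr N).le _) fun ω => tendsto_softTrunc _)
    tendsto_const_nhds

end Wasserstein

/-! ### Gradients, Hessians and traces -/

section Calculus

variable {k l n m : ℕ}

theorem contDiff_gradient {E : Type*} [NormedAddCommGroup E] [NormedSpace ℝ E]
    {f : E → Vec k → ℝ} {g : E → Vec k} (hf : ContDiff ℝ 2 (Function.uncurry f))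
    (hg : ContDiff ℝ 1 g) : ContDiff ℝ 1 fun z => gradient (f z) (g z) :=
  (InnerProductSpace.toDual ℝ (Vec k)).symm.toContinuousLinearEquiv.contDiff.comp
    (hf.fderiv hg (by norm_num))

theorem continuous_hess {E : Type*} [NormedAddCommGroup E] [NormedSpace ℝ E]
    {f : E → Vec k → ℝ} {g : E → Vec k} (hf : ContDiff ℝ 2 (Function.uncurry f))
    (hg : ContDiff ℝ 0 g) : Continuous fun z => hess (f z) (g z) := by
  have hgrad : ContDiff ℝ 1 (Function.uncurry fun z y => gradient (f z) y) :=
    contDiff_gradient (f := fun q : E × Vec k => f q.1) (g := Prod.snd)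
      (hf.comp (by fun_prop : ContDiff ℝ 2 fun q : (E × Vec k) × Vec k => (q.1.1, q.2)))
      contDiff_snd
  exact (hgrad.fderiv hg (by norm_num)).continuous

theorem continuous_hessMixed {φ : Vec k → Vec l → ℝ} (hφ : ContDiff ℝ 2 (Function.uncurry φ)) :
    Continuous fun z : Vec k × Vec l => hessMixed φ z.1 z.2 := by
  have hgrad : ContDiff ℝ 1 (Function.uncurry fun (z : Vec k × Vec l) x => gradient (φ x) z.2) :=
    contDiff_gradient (f := fun q : (Vec k × Vec l) × Vec k => φ q.2) (g := fun q => q.1.2)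
      (hφ.comp
        (by fun_prop : ContDiff ℝ 2 fun q : ((Vec k × Vec l) × Vec k) × Vec l => (q.1.2, q.2)))
      (by fun_prop)
  exact (hgrad.fderiv (contDiff_fst (n := 0)) (by norm_num)).continuous

theorem hess_congr {f g : Vec k → ℝ} {y : Vec k} (h : f =ᶠ[𝓝 y] g) : hess f y = hess g y :=
  Filter.EventuallyEq.fderiv_eq (h.eventuallyEq_nhds.mono fun _ h' => h'.gradient_eq)

theorem hess_fun_const (c : ℝ) (y : Vec k) : hess (fun _ => c) y = 0 := by
  simp [hess, gradient_fun_const']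

theorem gradient_comp_smul (f : Vec k → ℝ) (r : ℝ) (x : Vec k) :
    gradient (fun x' => f (r • x')) x = r • gradient f (r • x) := by
  simp [gradient, fderiv_comp_smul]

theorem hess_comp_smul (f : Vec k → ℝ) (r : ℝ) (x : Vec k) :
    hess (fun x' => f (r • x')) x = r ^ 2 • hess f (r • x) := by
  rw [hess, funext (gradient_comp_smul f r)]
  refine (congrFun (fderiv_const_smul_field r) x).trans ?_
  rw [Pi.smul_apply, fderiv_comp_smul, smul_smul, sq, hess]

theorem hessMixed_comp_smul (φ : Vec k → Vec l → ℝ) (r : ℝ) (x : Vec k) (y : Vec l) :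
    hessMixed (fun x' => φ (r • x')) x y = r • hessMixed φ (r • x) y :=
  fderiv_comp_smul (f := fun x' => gradient (φ x') y) r

theorem hasGradientAt_comp {Φ : ℝ → ℝ} {u : Vec k → ℝ} {y : Vec k}
    (hΦ : DifferentiableAt ℝ Φ (u y)) (hu : DifferentiableAt ℝ u y) :
    HasGradientAt (fun y' => Φ (u y')) (deriv Φ (u y) • gradient u y) y := by
  rw [hasGradientAt_iff_hasFDerivAt, map_smul, toDual_gradient]
  exact hΦ.hasDerivAt.comp_hasFDerivAt y hu.hasFDerivAt

theorem hess_comp {Φ : ℝ → ℝ} {u : Vec k → ℝ} {y : Vec k} (hΦ : ContDiffAt ℝ 2 Φ (u y))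
    (hu : ContDiff ℝ 2 u) :
    hess (fun y' => Φ (u y')) y =
      deriv Φ (u y) • hess u y + deriv (deriv Φ) (u y) • outer (gradient u y) (gradient u y) := by
  have hgrad : gradient (fun y' => Φ (u y')) =ᶠ[𝓝 y] fun y' => deriv Φ (u y') • gradient u y' := by
    filter_upwards [hu.continuous.continuousAt.eventually (hΦ.eventually (by simp))] with y' hy'
    exact (hasGradientAt_comp (hy'.differentiableAt two_ne_zero)
      (hu.differentiable two_ne_zero y')).gradient
  have hΦ' : DifferentiableAt ℝ (deriv Φ) (u y) :=
    (hΦ.derivWithin (m := 1) one_add_one_eq_two.le).differentiableAt one_ne_zero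
  have hu' : DifferentiableAt ℝ (gradient u) y :=
    (contDiff_gradient (f := fun _ : Vec k => u) (hu.comp contDiff_snd) contDiff_id).differentiable
      one_ne_zero y
  have hderiv := hΦ'.hasDerivAt.comp_hasFDerivAt y (hu.differentiable two_ne_zero y).hasFDerivAt
  rw [hess, hgrad.fderiv_eq]
  refine (hderiv.smul hu'.hasFDerivAt).fderiv.trans ?_
  ext1 v
  simp [hess, outer, smul_smul, inner_gradient_left]

theorem gradient_norm_sq (y : Vec k) : gradient (fun y' : Vec k => ‖y'‖ ^ 2) y = (2 : ℝ) • y := by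
  refine HasGradientAt.gradient ?_
  rw [hasGradientAt_iff_hasFDerivAt]
  refine (hasStrictFDerivAt_norm_sq y).hasFDerivAt.congr_fderiv ?_
  ext v
  simp

theorem hess_norm_sq (y : Vec k) :
    hess (fun y' : Vec k => ‖y'‖ ^ 2) y = (2 : ℝ) • ContinuousLinearMap.id ℝ (Vec k) := by
  rw [hess, funext gradient_norm_sq]
  exact ((hasFDerivAt_id y).const_smul (2 : ℝ)).fderiv

/-- The trace as a continuous linear functional, whose norm bounds traces of products. -/
def traceCLM (k : ℕ) : (Vec k →L[ℝ] Vec k) →L[ℝ] ℝ :=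
  LinearMap.toContinuousLinearMap
    (LinearMap.trace ℝ (Vec k) ∘ₗ ContinuousLinearMap.coeLM ℝ)

theorem traceCLM_apply (A : Mat k k) : traceCLM k A = trCLM A := rfl

theorem continuous_trCLM : Continuous (trCLM : Mat k k → ℝ) := (traceCLM k).continuous

theorem norm_adj (A : Mat k l) : ‖adj A‖ = ‖A‖ := LinearIsometryEquiv.norm_map _ A

theorem continuous_adj : Continuous (adj : Mat k l → Mat l k) :=
  LinearIsometryEquiv.continuous _

theorem abs_trCLM_comp_adj_comp_le (A : Mat k l) (B : Mat m l) (D : Mat m k) :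
    |trCLM ((A.comp (adj B)).comp D)| ≤ ‖traceCLM k‖ * (‖A‖ * ‖B‖ * ‖D‖) := by
  rw [← traceCLM_apply, ← Real.norm_eq_abs]
  refine (traceCLM k).le_opNorm_of_le ((ContinuousLinearMap.opNorm_comp_le _ _).trans ?_)
  gcongr
  exact (ContinuousLinearMap.opNorm_comp_le _ _).trans_eq (by rw [norm_adj])

theorem trCLM_comp_outer_self (g : Mat k l) (v : Vec k) :
    trCLM ((g.comp (adj g)).comp (outer v v)) = ‖adj g v‖ ^ 2 := by
  have hcomp : (g.comp (adj g)).comp (outer v v) = (innerSL ℝ v).smulRight (g (adj g v)) := by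
    ext1 w
    simp [outer]
  rw [hcomp, trCLM]
  refine (LinearMap.trace_smulRight ((innerSL ℝ v : Vec k →L[ℝ] ℝ) : Vec k →ₗ[ℝ] ℝ) _).trans ?_
  exact (ContinuousLinearMap.adjoint_inner_left g _ v).symm.trans (real_inner_self_eq_norm_sq _)

end Calculus

/-! ### The generator and its weighted bounds -/

/-- Conditions A1 and A2 of the paper: Lipschitz continuity, dissipativity of the fast
coefficients, linear growth of `K, f, h, σ` and sublinear growth of `g`. -/
structure SA12 {n m d : ℕ} (C : Coeffs n m d) where
  CL : ℝ
  γ : ℝ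
  hγ : 0 < γ
  ς : ℝ
  hς : ς ∈ Set.Ioo (0 : ℝ) 1
  CG : ℝ
  lipSlow : ∀ x1 x2 μ1 μ2 y1 y2, memP2 μ1 → memP2 μ2 →
    ‖C.b x1 μ1 y1 - C.b x2 μ2 y2‖ + ‖C.K x1 μ1 y1 - C.K x2 μ2 y2‖ +
        ‖C.σ x1 μ1 y1 - C.σ x2 μ2 y2‖ ≤
      CL * (‖x1 - x2‖ + ‖y1 - y2‖ + W2 μ1 μ2)
  lipFast : ∀ x1 x2 μ1 μ2 y1 y2, memP2 μ1 → memP2 μ2 →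
    ‖C.f x1 μ1 y1 - C.f x2 μ2 y2‖ + ‖C.h x1 μ1 y1 - C.h x2 μ2 y2‖ +
        ‖C.g x1 μ1 y1 - C.g x2 μ2 y2‖ ≤
      CL * (‖x1 - x2‖ + ‖y1 - y2‖ + W2 μ1 μ2)
  dissip : ∀ x μ y1 y2, memP2 μ →
    2 * ⟪C.f x μ y1 - C.f x μ y2, y1 - y2⟫ + ‖C.g x μ y1 - C.g x μ y2‖ ^ (2 : ℕ) ≤
      -γ * ‖y1 - y2‖ ^ (2 : ℕ)
  growth : ∀ x μ y, memP2 μ →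
    ‖C.K x μ y‖ + ‖C.f x μ y‖ + ‖C.h x μ y‖ + ‖C.σ x μ y‖ ≤ CG * (1 + ‖y‖)
  growthg : ∀ x μ y, memP2 μ → ‖C.g x μ y‖ ≤ CG * (1 + ‖y‖ ^ ς)

/-- Conditions A1–A3 contain A1–A2. -/
def SA13.toSA12 {n m d : ℕ} {C : Coeffs n m d} (h : SA13 C) : SA12 C :=
  { h with }

namespace SA12

variable {n m d : ℕ} {C : Coeffs n m d} (h : SA12 C)
include h

theorem lipCoeff_slow :
    LipCoeff (fun x μ y => (C.b x μ y, C.K x μ y, C.σ x μ y)) h.CL := by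
  intro x₁ x₂ μ₁ μ₂ y₁ y₂ h₁ h₂
  refine le_trans ?_ (h.lipSlow x₁ x₂ μ₁ μ₂ y₁ y₂ h₁ h₂)
  refine max_le ?_ (max_le ?_ ?_) <;> simp only [Prod.fst_sub, Prod.snd_sub] <;>
    linarith [norm_nonneg (C.b x₁ μ₁ y₁ - C.b x₂ μ₂ y₂), norm_nonneg (C.K x₁ μ₁ y₁ - C.K x₂ μ₂ y₂),
      norm_nonneg (C.σ x₁ μ₁ y₁ - C.σ x₂ μ₂ y₂)]

theorem lipCoeff_fast :
    LipCoeff (fun x μ y => (C.f x μ y, C.h x μ y, C.g x μ y)) h.CL := by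
  intro x₁ x₂ μ₁ μ₂ y₁ y₂ h₁ h₂
  refine le_trans ?_ (h.lipFast x₁ x₂ μ₁ μ₂ y₁ y₂ h₁ h₂)
  refine max_le ?_ (max_le ?_ ?_) <;> simp only [Prod.fst_sub, Prod.snd_sub] <;>
    linarith [norm_nonneg (C.f x₁ μ₁ y₁ - C.f x₂ μ₂ y₂), norm_nonneg (C.h x₁ μ₁ y₁ - C.h x₂ μ₂ y₂),
      norm_nonneg (C.g x₁ μ₁ y₁ - C.g x₂ μ₂ y₂)]

theorem exists_linear_growth : ∃ L : ℝ, 0 ≤ L ∧ ∀ x μ y, memP2 μ →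
    ‖C.b x μ y - C.b 0 μ 0‖ ≤ L * ((1 + ‖x‖) * (1 + ‖y‖)) ∧
    ‖C.K x μ y‖ ≤ L * (1 + ‖y‖) ∧ ‖C.f x μ y‖ ≤ L * (1 + ‖y‖) ∧ ‖C.h x μ y‖ ≤ L * (1 + ‖y‖) ∧
    ‖C.σ x μ y‖ ≤ L * (1 + ‖y‖) ∧ ‖C.g x μ y‖ ≤ L * (1 + ‖y‖) := by
  refine ⟨|h.CL| + 2 * |h.CG|, by positivity, fun x μ y hμ => ?_⟩
  have hx := norm_nonneg x
  have hy := norm_nonneg y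
  have hCL := abs_nonneg h.CL
  have hCG := abs_nonneg h.CG
  have hb : ‖C.b x μ y - C.b 0 μ 0‖ ≤ |h.CL| * (‖x‖ + ‖y‖) :=
    (norm_fst_le _).trans (h.lipCoeff_slow.norm_sub_zero_le hμ x y)
  have hgrowth : h.CG * (1 + ‖y‖) ≤ (|h.CL| + 2 * |h.CG|) * (1 + ‖y‖) := by
    gcongr
    linarith [le_abs_self h.CG]
  have hpow : ‖y‖ ^ h.ς ≤ 1 + ‖y‖ := by
    calc ‖y‖ ^ h.ς ≤ (1 + ‖y‖) ^ h.ς := by gcongr; exacts [h.hς.1.le, by linarith]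
      _ ≤ 1 + ‖y‖ := Real.rpow_le_self_of_one_le (by linarith) h.hς.2.le
  have hg : ‖C.g x μ y‖ ≤ |h.CG| * (1 + ‖y‖ ^ h.ς) :=
    (h.growthg x μ y hμ).trans (by gcongr; exact le_abs_self _)
  have hsum := (h.growth x μ y hμ).trans hgrowth
  have hK := norm_nonneg (C.K x μ y)
  have hf := norm_nonneg (C.f x μ y)
  have hh := norm_nonneg (C.h x μ y)
  have hσ := norm_nonneg (C.σ x μ y)
  refine ⟨hb.trans ?_, by linarith, by linarith, by linarith, by linarith, hg.trans ?_⟩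
  · gcongr
    · linarith
    · nlinarith [mul_nonneg hx hy]
  · calc |h.CG| * (1 + ‖y‖ ^ h.ς) ≤ |h.CG| * (2 * (1 + ‖y‖)) := by gcongr; linarith
      _ ≤ (|h.CL| + 2 * |h.CG|) * (1 + ‖y‖) := by nlinarith [mul_nonneg hCL hy]

end SA12

section Generator

variable {n m d : ℕ} {φ φ' : Vec n → Vec m → ℝ} {x : Vec n} {y : Vec m}

/-- The weighted sum of first and second order partial derivatives of `φ` that dominates the
generator, up to the drift `b`, when the coefficients have linear growth in `y`. -/
def testWeight (φ : Vec n → Vec m → ℝ) (x : Vec n) (y : Vec m) : ℝ :=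
  (1 + ‖y‖) ^ 2 * ((1 + ‖x‖) * ‖gradient (fun x' => φ x' y) x‖ + ‖gradient (φ x) y‖ +
    ‖hess (fun x' => φ x' y) x‖ + ‖hess (φ x) y‖ + ‖hessMixed φ x y‖)

/-- The part of the generator that acts on functions of the fast variable alone. -/
def fastGen (C : Coeffs n m d) (ε : ℝ) (μ : Measure (Vec n)) (x : Vec n) (ψ : Vec m → ℝ)
    (y : Vec m) : ℝ :=
  ⟪ε⁻¹ • C.f x μ y + (√ε)⁻¹ • C.h x μ y, gradient ψ y⟫ +
    (1 / (2 * ε)) * trCLM (((C.g x μ y).comp (adj (C.g x μ y))).comp (hess ψ y))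

theorem genSF_const_fst (C : Coeffs n m d) (ε : ℝ) (μ : Measure (Vec n)) (ψ : Vec m → ℝ)
    (x : Vec n) (y : Vec m) : genSF C ε μ (fun _ => ψ) x y = fastGen C ε μ x ψ y := by
  have hmixed : hessMixed (fun _ : Vec n => ψ) x y = 0 := by simp [hessMixed]
  simp [genSF, fastGen, hmixed, gradient_fun_const, hess_fun_const, trCLM]

theorem eventuallyEq_left (h : Function.uncurry φ =ᶠ[𝓝 (x, y)] Function.uncurry φ') :
    (φ · y) =ᶠ[𝓝 x] (φ' · y) :=
  (Continuous.prodMk_left y).continuousAt.eventually h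

theorem eventuallyEq_right (h : Function.uncurry φ =ᶠ[𝓝 (x, y)] Function.uncurry φ') :
    φ x =ᶠ[𝓝 y] φ' x :=
  (Continuous.prodMk_right x).continuousAt.eventually h

theorem hessMixed_congr (h : Function.uncurry φ =ᶠ[𝓝 (x, y)] Function.uncurry φ') :
    hessMixed φ x y = hessMixed φ' x y :=
  Filter.EventuallyEq.fderiv_eq <|
    ((Continuous.prodMk_left y).continuousAt.eventually h.eventuallyEq_nhds).mono
      fun _ hx' => (eventuallyEq_right hx').gradient_eq

theorem genSF_congr (C : Coeffs n m d) (ε : ℝ) (μ : Measure (Vec n))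
    (h : Function.uncurry φ =ᶠ[𝓝 (x, y)] Function.uncurry φ') :
    genSF C ε μ φ x y = genSF C ε μ φ' x y := by
  rw [genSF, genSF, (eventuallyEq_left h).gradient_eq, (eventuallyEq_right h).gradient_eq,
    hess_congr (eventuallyEq_left h), hess_congr (eventuallyEq_right h), hessMixed_congr h]

theorem testWeight_congr (h : Function.uncurry φ =ᶠ[𝓝 (x, y)] Function.uncurry φ') :
    testWeight φ x y = testWeight φ' x y := by
  rw [testWeight, testWeight, (eventuallyEq_left h).gradient_eq,
    (eventuallyEq_right h).gradient_eq, hess_congr (eventuallyEq_left h),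
    hess_congr (eventuallyEq_right h), hessMixed_congr h]

theorem norm_gradient_le_testWeight (φ : Vec n → Vec m → ℝ) (x : Vec n) (y : Vec m) :
    ‖gradient (fun x' => φ x' y) x‖ ≤ testWeight φ x y := by
  have hy : 1 ≤ (1 + ‖y‖) ^ 2 := one_le_pow₀ (by linarith [norm_nonneg y])
  have hx : ‖gradient (fun x' => φ x' y) x‖ ≤ (1 + ‖x‖) * ‖gradient (fun x' => φ x' y) x‖ :=
    le_mul_of_one_le_left (norm_nonneg _) (by linarith [norm_nonneg x])
  refine le_trans ?_ (le_mul_of_one_le_left (by positivity) hy)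
  linarith [norm_nonneg (gradient (φ x) y), norm_nonneg (hess (fun x' => φ x' y) x),
    norm_nonneg (hess (φ x) y), norm_nonneg (hessMixed φ x y)]

theorem testWeight_comp_smul_le {r : ℝ} (hr0 : 0 ≤ r) (hr1 : r ≤ 1) (φ : Vec n → Vec m → ℝ)
    (x : Vec n) (y : Vec m) :
    testWeight (fun x' => φ (r • x')) x y ≤ testWeight φ (r • x) y := by
  have hr2 : r ^ 2 ≤ 1 := pow_le_one₀ hr0 hr1
  have hxr : (1 + ‖x‖) * r ≤ 1 + r * ‖x‖ := by nlinarith [norm_nonneg x]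
  unfold testWeight
  rw [gradient_comp_smul (φ · y), hess_comp_smul (φ · y), hessMixed_comp_smul]
  simp only [norm_smul, Real.norm_of_nonneg hr0, norm_pow]
  rw [← mul_assoc (1 + ‖x‖)]
  gcongr
  · exact mul_le_of_le_one_left (norm_nonneg _) hr2
  · exact mul_le_of_le_one_left (norm_nonneg _) hr1

theorem continuous_partialDerivs (hφ : ContDiff ℝ 2 (Function.uncurry φ)) :
    Continuous (fun z : Vec n × Vec m => gradient (fun x' => φ x' z.2) z.1) ∧
    Continuous (fun z : Vec n × Vec m => gradient (φ z.1) z.2) ∧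
    Continuous (fun z : Vec n × Vec m => hess (fun x' => φ x' z.2) z.1) ∧
    Continuous (fun z : Vec n × Vec m => hess (φ z.1) z.2) ∧
    Continuous fun z : Vec n × Vec m => hessMixed φ z.1 z.2 := by
  have hfst : ContDiff ℝ 2 (Function.uncurry fun (z : Vec n × Vec m) x' => φ x' z.2) :=
    hφ.comp (by fun_prop : ContDiff ℝ 2 fun q : (Vec n × Vec m) × Vec n => (q.2, q.1.2))
  have hsnd : ContDiff ℝ 2 (Function.uncurry fun (z : Vec n × Vec m) => φ z.1) :=
    hφ.comp (by fun_prop : ContDiff ℝ 2 fun q : (Vec n × Vec m) × Vec m => (q.1.1, q.2))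
  exact ⟨(contDiff_gradient hfst contDiff_fst).continuous,
    (contDiff_gradient hsnd contDiff_snd).continuous, continuous_hess hfst contDiff_fst,
    continuous_hess hsnd contDiff_snd, continuous_hessMixed hφ⟩

namespace TestFun2

theorem continuous_testWeight (hφ : TestFun2 φ) :
    Continuous fun z : Vec n × Vec m => testWeight φ z.1 z.2 := by
  obtain ⟨hx, hy, hxx, hyy, hxy⟩ := continuous_partialDerivs hφ.1
  unfold testWeight
  fun_prop

theorem exists_testWeight_le (hφ : TestFun2 φ) : ∃ B, ∀ x y, testWeight φ x y ≤ B := by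
  have hsupp : HasCompactSupport fun z : Vec n × Vec m => testWeight φ z.1 z.2 := by
    refine HasCompactSupport.intro hφ.2 fun z hz => ?_
    have hzero : testWeight φ z.1 z.2 = testWeight (fun _ _ => 0) z.1 z.2 :=
      testWeight_congr (notMem_tsupport_iff_eventuallyEq.1 hz)
    rw [hzero]
    simp [testWeight, hessMixed, gradient_fun_const, hess_fun_const]
  obtain ⟨B, hB⟩ := hsupp.exists_bound_of_continuous hφ.continuous_testWeight
  exact ⟨B, fun x y => (le_abs_self _).trans (hB (x, y))⟩

end TestFun2

end Generator

section GeneratorBound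

variable {n m d : ℕ} {C : Coeffs n m d}

theorem testWeight_dominates (φ : Vec n → Vec m → ℝ) (x : Vec n) (y : Vec m) :
    (1 + ‖y‖) ^ 2 * ((1 + ‖x‖) * ‖gradient (fun x' => φ x' y) x‖) ≤ testWeight φ x y ∧
    (1 + ‖y‖) ^ 2 * ‖gradient (φ x) y‖ ≤ testWeight φ x y ∧
    (1 + ‖y‖) ^ 2 * ‖hess (fun x' => φ x' y) x‖ ≤ testWeight φ x y ∧
    (1 + ‖y‖) ^ 2 * ‖hess (φ x) y‖ ≤ testWeight φ x y ∧
    (1 + ‖y‖) ^ 2 * ‖hessMixed φ x y‖ ≤ testWeight φ x y := by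
  have hx : 0 ≤ (1 + ‖x‖) * ‖gradient (fun x' => φ x' y) x‖ := by positivity
  have hy := norm_nonneg (gradient (φ x) y)
  have hxx := norm_nonneg (hess (fun x' => φ x' y) x)
  have hyy := norm_nonneg (hess (φ x) y)
  have hxy := norm_nonneg (hessMixed φ x y)
  unfold testWeight
  refine ⟨?_, ?_, ?_, ?_, ?_⟩ <;> gcongr <;> linarith

theorem abs_trCLM_comp_adj_comp_le_of_le {k l : ℕ} {A : Mat k d} {B : Mat l d} {D : Mat l k}
    {L a w : ℝ} (hA : ‖A‖ ≤ L * a) (hB : ‖B‖ ≤ L * a) (hD : a ^ 2 * ‖D‖ ≤ w) :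
    |trCLM ((A.comp (adj B)).comp D)| ≤ ‖traceCLM k‖ * L ^ 2 * w := by
  calc _ ≤ ‖traceCLM k‖ * (‖A‖ * ‖B‖ * ‖D‖) := abs_trCLM_comp_adj_comp_le A B D
    _ ≤ ‖traceCLM k‖ * (L * a * (L * a) * ‖D‖) := by
        have := (norm_nonneg A).trans hA
        gcongr
    _ = ‖traceCLM k‖ * L ^ 2 * (a ^ 2 * ‖D‖) := by ring
    _ ≤ _ := by gcongr

theorem abs_inner_add_smul_le {k : ℕ} {u v w : Vec k} {α β L a W : ℝ} (hL : 0 ≤ L)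
    (hu : ‖u‖ ≤ L * a) (hv : ‖v‖ ≤ L * a) (hw : a * ‖w‖ ≤ W) :
    |⟪α • u + β • v, w⟫| ≤ L * (|α| + |β|) * W := by
  calc _ ≤ (‖α • u‖ + ‖β • v‖) * ‖w‖ :=
        (abs_real_inner_le_norm _ _).trans (by gcongr; exact norm_add_le _ _)
    _ ≤ (|α| * (L * a) + |β| * (L * a)) * ‖w‖ := by
        rw [norm_smul, norm_smul, Real.norm_eq_abs, Real.norm_eq_abs]
        gcongr
    _ = L * (|α| + |β|) * (a * ‖w‖) := by ring
    _ ≤ _ := by gcongr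

theorem SA12.exists_abs_genSF_sub_le (h : SA12 C) (ε : ℝ) : ∃ M : ℝ, ∀ μ φ x y, memP2 μ →
    |genSF C ε μ φ x y - ⟪C.b 0 μ 0, gradient (fun x' => φ x' y) x⟫| ≤ M * testWeight φ x y := by
  obtain ⟨L, hL, hgrowth⟩ := h.exists_linear_growth
  set τ := fun k => ‖traceCLM k‖ * L ^ 2
  set s := (√ε)⁻¹
  refine ⟨L * (|1| + |s|) + L * (|ε⁻¹| + |s|) + |1 / 2| * τ n + |1 / (2 * ε)| * τ m + |s| * τ n,
    fun μ φ x y hμ => ?_⟩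
  obtain ⟨hb, hK, hf, hh, hσ, hg⟩ := hgrowth x μ y hμ
  obtain ⟨wx, wy, wxx, wyy, wxy⟩ := testWeight_dominates φ x y
  have ha : 1 ≤ 1 + ‖y‖ := by linarith [norm_nonneg y]
  have hsq : 1 + ‖y‖ ≤ (1 + ‖y‖) ^ 2 := le_self_pow₀ ha two_ne_zero
  have hX : 1 + ‖y‖ ≤ (1 + ‖x‖) * (1 + ‖y‖) :=
    le_mul_of_one_le_left (by positivity) (by linarith [norm_nonneg x])
  have hslow := abs_inner_add_smul_le (α := 1) (β := s) hL hb (hK.trans (by gcongr))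
    (w := gradient (fun x' => φ x' y) x) (W := testWeight φ x y) <| by
      refine le_trans ?_ wx
      rw [mul_comm (1 + ‖x‖), mul_assoc]
      gcongr
  have hfast := abs_inner_add_smul_le (α := ε⁻¹) (β := s) hL hf hh
    (w := gradient (φ x) y) (le_trans (by gcongr) wy)
  have hxx := abs_trCLM_comp_adj_comp_le_of_le hσ hσ wxx
  have hyy := abs_trCLM_comp_adj_comp_le_of_le hg hg wyy
  have hxy := abs_trCLM_comp_adj_comp_le_of_le hσ hg wxy
  have hsplit : genSF C ε μ φ x y - ⟪C.b 0 μ 0, gradient (fun x' => φ x' y) x⟫ =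
      ⟪(1 : ℝ) • (C.b x μ y - C.b 0 μ 0) + s • C.K x μ y, gradient (fun x' => φ x' y) x⟫ +
      ⟪ε⁻¹ • C.f x μ y + s • C.h x μ y, gradient (φ x) y⟫ +
      (1 / 2) * trCLM (((C.σ x μ y).comp (adj (C.σ x μ y))).comp (hess (fun x' => φ x' y) x)) +
      (1 / (2 * ε)) * trCLM (((C.g x μ y).comp (adj (C.g x μ y))).comp (hess (φ x) y)) +
      s * trCLM (((C.σ x μ y).comp (adj (C.g x μ y))).comp (hessMixed φ x y)) := by
    simp only [genSF, inner_add_left, inner_sub_left, one_smul, s]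
    ring
  rw [hsplit]
  refine (abs_add_le _ _).trans <| (add_le_add ((abs_add_le _ _).trans <| add_le_add
    ((abs_add_le _ _).trans <| add_le_add ((abs_add_le _ _).trans <| add_le_add hslow hfast)
      (abs_mul _ _).le) (abs_mul _ _).le) (abs_mul _ _).le).trans ?_
  simp only [add_mul, mul_assoc, τ] at hxx hyy hxy ⊢
  gcongr

end GeneratorBound

/-! ### Dynkin's formula -/

theorem SA12.exists_abs_genSF_le {n m d : ℕ} {C : Coeffs n m d} (h : SA12 C) (ε : ℝ)
    {φ : Vec n → Vec m → ℝ} (hφ : TestFun2 φ) : ∃ D : ℝ, ∀ r ∈ Set.Icc (0 : ℝ) 1, ∀ μ x y,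
      memP2 μ → |genSF C ε μ (fun x' => φ (r • x')) x y| ≤ D * (1 + ‖C.b 0 μ 0‖) := by
  obtain ⟨M, hM⟩ := h.exists_abs_genSF_sub_le ε
  obtain ⟨B, hB⟩ := hφ.exists_testWeight_le
  refine ⟨(1 + |M|) * B, fun r hr μ x y hμ => ?_⟩
  set φ' : Vec n → Vec m → ℝ := fun x' => φ (r • x')
  have hgrad := norm_gradient_le_testWeight φ' x y
  have hw : testWeight φ' x y ≤ B := (testWeight_comp_smul_le hr.1 hr.2 φ x y).trans (hB _ _)
  have hw0 : 0 ≤ testWeight φ' x y := (norm_nonneg _).trans hgrad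
  have hmain : |genSF C ε μ φ' x y - ⟪C.b 0 μ 0, gradient (fun x' => φ' x' y) x⟫| ≤ |M| * B :=
    (hM μ φ' x y hμ).trans (mul_le_mul (le_abs_self M) hw hw0 (abs_nonneg M))
  have hdrift : |⟪C.b 0 μ 0, gradient (fun x' => φ' x' y) x⟫| ≤ ‖C.b 0 μ 0‖ * B :=
    (abs_real_inner_le_norm _ _).trans (by gcongr; exact hgrad.trans hw)
  have hB0 : 0 ≤ B := hw0.trans hw
  calc _ ≤ |M| * B + ‖C.b 0 μ 0‖ * B := by
        rw [← sub_add_cancel (genSF C ε μ φ' x y) ⟪C.b 0 μ 0, gradient (fun x' => φ' x' y) x⟫]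
        exact (abs_add_le _ _).trans (add_le_add hmain hdrift)
    _ ≤ _ := by nlinarith [mul_nonneg (mul_nonneg (abs_nonneg M) hB0) (norm_nonneg (C.b 0 μ 0))]

/-- Integrability over `[0, t]` of the drift `b` at the reference point `(0, 0)`. It can fail, since
the second moments of `X` need not be locally bounded in time; the time integrals in
`IsSFSolution.mart` may then take the junk value `0`. -/
def DriftIntegrable {n m d : ℕ} (C : Coeffs n m d) {Ω : Type} [MeasurableSpace Ω] (P : Measure Ω)
    (X : ℝ → Ω → Vec n) (t : ℝ) : Prop :=
  IntegrableOn (fun s => C.b 0 (P.map (X s)) 0) (Set.Ioc 0 t)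

theorem DriftIntegrable.mono {n m d : ℕ} {C : Coeffs n m d} {Ω : Type} [MeasurableSpace Ω]
    {P : Measure Ω} {X : ℝ → Ω → Vec n} {s t : ℝ} (ht : DriftIntegrable C P X t) (hst : s ≤ t) :
    DriftIntegrable C P X s :=
  ht.mono_set (Set.Ioc_subset_Ioc_right hst)

theorem aestronglyMeasurable_trCLM_comp {α : Type*} [MeasurableSpace α] {μ : Measure α}
    {k l m : ℕ} {A : α → Mat k l} {B : α → Mat m l} {D : α → Mat m k}
    (hA : AEStronglyMeasurable A μ) (hB : AEStronglyMeasurable B μ)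
    (hD : AEStronglyMeasurable D μ) :
    AEStronglyMeasurable (fun a => trCLM (((A a).comp (adj (B a))).comp (D a))) μ := by
  have hcont : Continuous fun q : Mat k l × Mat m l × Mat m k =>
      trCLM ((q.1.comp (adj q.2.1)).comp q.2.2) :=
    continuous_trCLM.comp ((continuous_fst.clm_comp
      (continuous_adj.comp (continuous_fst.comp continuous_snd))).clm_comp
      (continuous_snd.comp continuous_snd))
  exact hcont.comp_aestronglyMeasurable (hA.prodMk (hB.prodMk hD))

namespace IsSFSolution

variable {n m d : ℕ} {C : Coeffs n m d} {ε : ℝ} {Ω : Type} [mΩ : MeasurableSpace Ω]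
  {P : Measure Ω} [IsProbabilityMeasure P] {ℱ : Filtration ℝ mΩ} {X : ℝ → Ω → Vec n}
  {Y : ℝ → Ω → Vec m} {ξ : Ω → Vec n} {ζ : Ω → Vec m} {φ : Vec n → Vec m → ℝ}

theorem aestronglyMeasurable_genSF (hS : IsSFSolution C ε P ℱ X Y ξ ζ) (h : SA12 C)
    (hφ : ContDiff ℝ 2 (Function.uncurry φ)) (t : ℝ) (ω : Ω) :
    AEStronglyMeasurable (fun s => genSF C ε (P.map (X s)) φ (X s ω) (Y s ω))
      (volume.restrict (Set.Ioc 0 t)) := by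
  have hz : Continuous fun s => (X s ω, Y s ω) := (hS.contX ω).prodMk (hS.contY ω)
  obtain ⟨hx, hy, hxx, hyy, hxy⟩ := continuous_partialDerivs hφ
  have hslow := h.lipCoeff_slow.aestronglyMeasurable_path hS.measX hS.contX hS.lawP2X
    (hS.contX ω) (hS.contY ω) t
  have hfast := h.lipCoeff_fast.aestronglyMeasurable_path hS.measX hS.contX hS.lawP2X
    (hS.contX ω) (hS.contY ω) t
  have hxz := (hx.comp hz).aestronglyMeasurable (μ := volume.restrict (Set.Ioc 0 t))
  have hyz := (hy.comp hz).aestronglyMeasurable (μ := volume.restrict (Set.Ioc 0 t))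
  have hσ := hslow.snd.snd
  have hg := hfast.snd.snd
  have hdx := (hslow.fst.add (hslow.snd.fst.const_smul (√ε)⁻¹)).inner (𝕜 := ℝ) hxz
  have hdy := ((hfast.fst.const_smul ε⁻¹).add (hfast.snd.fst.const_smul (√ε)⁻¹)).inner (𝕜 := ℝ) hyz
  have hdxx := aestronglyMeasurable_trCLM_comp hσ hσ (hxx.comp hz).aestronglyMeasurable
  have hdyy := aestronglyMeasurable_trCLM_comp hg hg (hyy.comp hz).aestronglyMeasurable
  have hdxy := aestronglyMeasurable_trCLM_comp hσ hg (hxy.comp hz).aestronglyMeasurable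
  exact (((hdx.add hdy).add (hdxx.const_mul _)).add (hdyy.const_mul _)).add (hdxy.const_mul _)

theorem aestronglyMeasurable_drift (hS : IsSFSolution C ε P ℱ X Y ξ ζ) (h : SA12 C) (t : ℝ) :
    AEStronglyMeasurable (fun s => C.b 0 (P.map (X s)) 0) (volume.restrict (Set.Ioc 0 t)) :=
  (h.lipCoeff_slow.aestronglyMeasurable_path hS.measX hS.contX hS.lawP2X
    continuous_const continuous_const t).fst

theorem integrable_test (hS : IsSFSolution C ε P ℱ X Y ξ ζ) (hφ : TestFun2 φ) (t : ℝ) :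
    Integrable (fun ω => φ (X t ω) (Y t ω)) P := by
  obtain ⟨B, hB⟩ := hφ.2.exists_bound_of_continuous hφ.1.continuous
  exact Integrable.of_bound (hφ.1.continuous.comp_aestronglyMeasurable
    ((hS.measX t).prodMk (hS.measY t)).aestronglyMeasurable) B
    (ae_of_all _ fun ω => hB (X t ω, Y t ω))

theorem integrable_integral_genSF (hS : IsSFSolution C ε P ℱ X Y ξ ζ) (hφ : TestFun2 φ) {t : ℝ}
    (ht : 0 ≤ t) :
    Integrable (fun ω => ∫ r in Set.Ioc 0 t, genSF C ε (P.map (X r)) φ (X r ω) (Y r ω)) P :=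
  ((hS.integrable_test hφ t).sub ((hS.mart φ hφ).1 t ht).2).congr
    (ae_of_all _ fun ω => sub_sub_cancel (φ (X t ω) (Y t ω)) _)

theorem setIntegral_test_sub (hS : IsSFSolution C ε P ℱ X Y ξ ζ) (hφ : TestFun2 φ) {s t : ℝ}
    (hs : 0 ≤ s) (hst : s ≤ t) {A : Set Ω} (hA : MeasurableSet[ℱ s] A) :
    ∫ ω in A, φ (X t ω) (Y t ω) ∂P - ∫ ω in A, φ (X s ω) (Y s ω) ∂P =
      ∫ ω in A, ((∫ r in Set.Ioc 0 t, genSF C ε (P.map (X r)) φ (X r ω) (Y r ω)) -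
        ∫ r in Set.Ioc 0 s, genSF C ε (P.map (X r)) φ (X r ω) (Y r ω)) ∂P := by
  obtain ⟨hM, hmart⟩ := hS.mart φ hφ
  set I : ℝ → Ω → ℝ := fun u ω =>
    ∫ r in Set.Ioc 0 u, genSF C ε (P.map (X r)) φ (X r ω) (Y r ω)
  have hφ_int := hS.integrable_test hφ
  have hI_int : ∀ u, 0 ≤ u → Integrable (I u) P := fun u => hS.integrable_integral_genSF hφ
  have ht := hs.trans hst
  have hcond : ∫ ω in A, (φ (X s ω) (Y s ω) - I s ω) ∂P =
      ∫ ω in A, (φ (X t ω) (Y t ω) - I t ω) ∂P := by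
    rw [← setIntegral_condExp (ℱ.le s) (hM t ht).2 hA]
    exact setIntegral_congr_ae (ℱ.le s A hA) ((hmart s t hs hst).mono fun ω hω _ => hω.symm)
  rw [integral_sub (hφ_int s).integrableOn (hI_int s hs).integrableOn,
    integral_sub (hφ_int t).integrableOn (hI_int t ht).integrableOn] at hcond
  rw [integral_sub (hI_int t ht).integrableOn (hI_int s hs).integrableOn]
  linarith

end IsSFSolution

section Localization

variable {n m d : ℕ} {φ : Vec n → Vec m → ℝ} {ψ : Vec m → ℝ}

theorem TestFun2.comp_smul_fst (hφ : TestFun2 φ) {r : ℝ} (hr : r ≠ 0) :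
    TestFun2 fun x => φ (r • x) :=
  ⟨hφ.1.comp (by fun_prop : ContDiff ℝ 2 fun z : Vec n × Vec m => (r • z.1, z.2)),
    hφ.2.comp_homeomorph ((Homeomorph.smulOfNeZero r hr).prodCongr (Homeomorph.refl (Vec m)))⟩

/-- The product of `ψ` with a smooth cutoff in the slow variable that equals `1` on the unit
ball; rescaling the slow variable exhausts the space. -/
def cutoffFst (n : ℕ) (ψ : Vec m → ℝ) (x : Vec n) (y : Vec m) : ℝ :=
  (⟨1, 2, one_pos, one_lt_two⟩ : ContDiffBump (0 : Vec n)) x * ψ y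

theorem TestFun.cutoffFst (hψ : TestFun ψ) : TestFun2 (cutoffFst n ψ) := by
  set χ : ContDiffBump (0 : Vec n) := ⟨1, 2, one_pos, one_lt_two⟩
  refine ⟨(χ.contDiff.comp contDiff_fst).mul (hψ.1.comp contDiff_snd),
    HasCompactSupport.of_support_subset_isCompact (χ.hasCompactSupport.prod hψ.2) ?_⟩
  intro z hz
  exact ⟨subset_tsupport _ (left_ne_zero_of_mul hz), subset_tsupport _ (right_ne_zero_of_mul hz)⟩

theorem abs_cutoffFst_le (ψ : Vec m → ℝ) (x : Vec n) (y : Vec m) : |cutoffFst n ψ x y| ≤ |ψ y| := by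
  rw [cutoffFst, abs_mul, abs_of_nonneg (ContDiffBump.nonneg _)]
  exact mul_le_of_le_one_left (abs_nonneg _) (ContDiffBump.le_one _)

theorem cutoffFst_smul_eq {r : ℝ} {x : Vec n} (hx : ‖r • x‖ < 1) (y : Vec m) :
    cutoffFst n ψ (r • x) y = ψ y := by
  rw [cutoffFst, ContDiffBump.one_of_mem_closedBall _ (by simpa using hx.le), one_mul]

theorem genSF_cutoffFst_smul (C : Coeffs n m d) (ε : ℝ) (μ : Measure (Vec n)) {r : ℝ} {x : Vec n}
    (hx : ‖r • x‖ < 1) (y : Vec m) :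
    genSF C ε μ (fun x' => cutoffFst n ψ (r • x')) x y = fastGen C ε μ x ψ y := by
  rw [← genSF_const_fst]
  refine genSF_congr C ε μ ?_
  have hcont : ContinuousAt (fun z : Vec n × Vec m => ‖r • z.1‖) (x, y) := by fun_prop
  filter_upwards [hcont.eventually_lt_const hx] with z hz using cutoffFst_smul_eq hz z.2

theorem eventually_norm_smul_lt_one (x : Vec n) :
    ∀ᶠ N : ℕ in atTop, ‖(1 / ((N : ℝ) + 1)) • x‖ < 1 := by
  have h : Tendsto (fun N : ℕ => (1 / ((N : ℝ) + 1)) • x) atTop (𝓝 0) := by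
    have hr := tendsto_one_div_add_atTop_nhds_zero_nat (𝕜 := ℝ)
    rw [← zero_smul ℝ x]
    exact hr.smul tendsto_const_nhds
  exact (tendsto_zero_iff_norm_tendsto_zero.1 h).eventually_lt_const one_pos

end Localization

namespace IsSFSolution

variable {n m d : ℕ} {C : Coeffs n m d} {ε : ℝ} {Ω : Type} [mΩ : MeasurableSpace Ω]
  {P : Measure Ω} [IsProbabilityMeasure P] {ℱ : Filtration ℝ mΩ} {X : ℝ → Ω → Vec n}
  {Y : ℝ → Ω → Vec m} {ξ : Ω → Vec n} {ζ : Ω → Vec m} {ψ : Vec m → ℝ} {s t : ℝ}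

theorem integrableOn_fastGen (hS : IsSFSolution C ε P ℱ X Y ξ ζ) (h : SA12 C) (hψ : TestFun ψ)
    (ht : DriftIntegrable C P X t) (ω : Ω) :
    IntegrableOn (fun s => fastGen C ε (P.map (X s)) (X s ω) ψ (Y s ω)) (Set.Ioc 0 t) := by
  obtain ⟨D, hD⟩ := h.exists_abs_genSF_le ε (hψ.cutoffFst (n := n))
  simp only [← genSF_const_fst]
  refine Integrable.mono' (((integrable_const 1).add ht.norm).const_mul D)
    (hS.aestronglyMeasurable_genSF (φ := fun _ => ψ) h (hψ.1.comp contDiff_snd) t ω)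
    ((ae_restrict_mem measurableSet_Ioc).mono fun s hs => ?_)
  have hmem := hS.lawP2X s hs.1.le
  rw [Real.norm_eq_abs, genSF_const_fst, ← genSF_cutoffFst_smul (r := 0) _ _ _ (by simp)]
  exact hD 0 (Set.left_mem_Icc.2 zero_le_one) _ _ _ hmem

theorem tendsto_integral_cutoffFst (hS : IsSFSolution C ε P ℱ X Y ξ ζ) (hψ : TestFun ψ) (t : ℝ) :
    Tendsto (fun N : ℕ => ∫ ω, cutoffFst n ψ ((1 / ((N : ℝ) + 1)) • X t ω) (Y t ω) ∂P) atTop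
      (𝓝 (∫ ω, ψ (Y t ω) ∂P)) := by
  obtain ⟨B, hB⟩ := hψ.2.exists_bound_of_continuous hψ.1.continuous
  refine tendsto_integral_of_dominated_convergence (fun _ => B)
    (fun N => (hS.integrable_test (hψ.cutoffFst.comp_smul_fst (by positivity)) t).1)
    (integrable_const _) (fun N => ae_of_all _ fun ω => ?_) (ae_of_all _ fun ω => ?_)
  · exact (abs_cutoffFst_le _ _ _).trans (hB _)
  · refine tendsto_const_nhds.congr' ?_
    filter_upwards [eventually_norm_smul_lt_one (X t ω)] with N hN
    exact (cutoffFst_smul_eq hN _).symm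

theorem exists_bound_tendsto_integral_genSF_cutoffFst (hS : IsSFSolution C ε P ℱ X Y ξ ζ)
    (h : SA12 C) (hψ : TestFun ψ) (ht : DriftIntegrable C P X t) : ∃ B : ℝ, ∀ ω,
    (∀ N : ℕ, |∫ s in Set.Ioc 0 t, genSF C ε (P.map (X s))
      (fun x => cutoffFst n ψ ((1 / ((N : ℝ) + 1)) • x)) (X s ω) (Y s ω)| ≤ B) ∧
    Tendsto (fun N : ℕ => ∫ s in Set.Ioc 0 t, genSF C ε (P.map (X s))
      (fun x => cutoffFst n ψ ((1 / ((N : ℝ) + 1)) • x)) (X s ω) (Y s ω)) atTop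
      (𝓝 (∫ s in Set.Ioc 0 t, fastGen C ε (P.map (X s)) (X s ω) ψ (Y s ω))) := by
  obtain ⟨D, hD⟩ := h.exists_abs_genSF_le ε (hψ.cutoffFst (n := n))
  have hr : ∀ N : ℕ, 1 / ((N : ℝ) + 1) ∈ Set.Icc (0 : ℝ) 1 := fun N =>
    ⟨by positivity, (div_le_one (by positivity)).2 (by linarith [N.cast_nonneg (α := ℝ)])⟩
  have hbound : Integrable (fun s => D * (1 + ‖C.b 0 (P.map (X s)) 0‖))
      (volume.restrict (Set.Ioc 0 t)) := ((integrable_const 1).add ht.norm).const_mul D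
  have hle : ∀ (N : ℕ) ω, ∀ᵐ s ∂volume.restrict (Set.Ioc 0 t), ‖genSF C ε (P.map (X s))
      (fun x => cutoffFst n ψ ((1 / ((N : ℝ) + 1)) • x)) (X s ω) (Y s ω)‖ ≤
        D * (1 + ‖C.b 0 (P.map (X s)) 0‖) :=
    fun N ω => (ae_restrict_mem measurableSet_Ioc).mono fun s hs =>
      hD _ (hr N) _ _ _ (hS.lawP2X s hs.1.le)
  refine ⟨∫ s in Set.Ioc 0 t, D * (1 + ‖C.b 0 (P.map (X s)) 0‖), fun ω =>
    ⟨fun N => norm_integral_le_of_norm_le hbound (hle N ω), ?_⟩⟩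
  refine tendsto_integral_of_dominated_convergence _ (fun N => hS.aestronglyMeasurable_genSF h
    (hψ.cutoffFst.comp_smul_fst (by positivity)).1 t ω) hbound (fun N => hle N ω)
    (ae_of_all _ fun s => tendsto_const_nhds.congr' ?_)
  filter_upwards [eventually_norm_smul_lt_one (X s ω)] with N hN
  exact (genSF_cutoffFst_smul _ _ _ hN _).symm

theorem setIntegral_fastGen_eq_sub (hS : IsSFSolution C ε P ℱ X Y ξ ζ) (h : SA12 C)
    (hψ : TestFun ψ) (hs : 0 ≤ s) (hst : s ≤ t) (ht : DriftIntegrable C P X t) (ω : Ω) :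
    ∫ r in Set.Ioc s t, fastGen C ε (P.map (X r)) (X r ω) ψ (Y r ω) =
      (∫ r in Set.Ioc 0 t, fastGen C ε (P.map (X r)) (X r ω) ψ (Y r ω)) -
        ∫ r in Set.Ioc 0 s, fastGen C ε (P.map (X r)) (X r ω) ψ (Y r ω) := by
  have hint := hS.integrableOn_fastGen h hψ ht ω
  rw [← Set.Ioc_union_Ioc_eq_Ioc hs hst, setIntegral_union (Set.Ioc_disjoint_Ioc_of_le le_rfl)
    measurableSet_Ioc (hint.mono_set (Set.Ioc_subset_Ioc_right hst))
    (hint.mono_set (Set.Ioc_subset_Ioc_left hs)), add_sub_cancel_left]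

theorem integrable_setIntegral_fastGen (hS : IsSFSolution C ε P ℱ X Y ξ ζ) (h : SA12 C)
    (hψ : TestFun ψ) (hs : 0 ≤ s) (hst : s ≤ t) (ht : DriftIntegrable C P X t) :
    Integrable (fun ω => ∫ r in Set.Ioc s t, fastGen C ε (P.map (X r)) (X r ω) ψ (Y r ω)) P := by
  have hzero : ∀ u, 0 ≤ u → DriftIntegrable C P X u → Integrable
      (fun ω => ∫ r in Set.Ioc 0 u, fastGen C ε (P.map (X r)) (X r ω) ψ (Y r ω)) P := by
    intro u hu0 hu
    obtain ⟨B, hB⟩ := hS.exists_bound_tendsto_integral_genSF_cutoffFst h hψ hu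
    exact Integrable.of_bound (aestronglyMeasurable_of_tendsto_ae atTop (fun N =>
        (hS.integrable_integral_genSF (hψ.cutoffFst.comp_smul_fst (by positivity)) hu0).1)
        (ae_of_all _ fun ω => (hB ω).2)) B
      (ae_of_all _ fun ω => le_of_tendsto' (hB ω).2.norm (hB ω).1)
  simp only [hS.setIntegral_fastGen_eq_sub h hψ hs hst ht]
  exact (hzero t (hs.trans hst) ht).sub (hzero s hs (ht.mono hst))

theorem integral_fast_sub (hS : IsSFSolution C ε P ℱ X Y ξ ζ) (h : SA12 C) (hψ : TestFun ψ)
    (hs : 0 ≤ s) (hst : s ≤ t) (ht : DriftIntegrable C P X t) :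
    ∫ ω, ψ (Y t ω) ∂P - ∫ ω, ψ (Y s ω) ∂P =
      ∫ ω, (∫ r in Set.Ioc s t, fastGen C ε (P.map (X r)) (X r ω) ψ (Y r ω)) ∂P := by
  obtain ⟨Bt, hBt⟩ := hS.exists_bound_tendsto_integral_genSF_cutoffFst h hψ ht
  obtain ⟨Bs, hBs⟩ := hS.exists_bound_tendsto_integral_genSF_cutoffFst h hψ (ht.mono hst)
  have hφ : ∀ N : ℕ, TestFun2 fun x => cutoffFst n ψ ((1 / ((N : ℝ) + 1)) • x) := fun N =>
    hψ.cutoffFst.comp_smul_fst (by positivity)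
  refine tendsto_nhds_unique
    ((hS.tendsto_integral_cutoffFst hψ t).sub (hS.tendsto_integral_cutoffFst hψ s)) ?_
  have hdyn := fun N => hS.setIntegral_test_sub (hφ N) hs hst MeasurableSet.univ
  simp only [Measure.restrict_univ] at hdyn
  simp only [hdyn]
  refine tendsto_integral_of_dominated_convergence (fun _ => Bt + Bs)
    (fun N => ((hS.integrable_integral_genSF (hφ N) (hs.trans hst)).sub
      (hS.integrable_integral_genSF (hφ N) hs)).1) (integrable_const _)
    (fun N => ae_of_all _ fun ω => norm_sub_le_of_le ((hBt ω).1 N) ((hBs ω).1 N))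
    (ae_of_all _ fun ω => ?_)
  rw [hS.setIntegral_fastGen_eq_sub h hψ hs hst ht]
  exact (hBt ω).2.sub (hBs ω).2

theorem integral_fast_sub_le (hS : IsSFSolution C ε P ℱ X Y ξ ζ) (h : SA12 C) (hψ : TestFun ψ)
    {H : Vec m → ℝ} (hH : Continuous H) {B : ℝ} (hHB : ∀ y, |H y| ≤ B)
    (hle : ∀ μ x y, memP2 μ → fastGen C ε μ x ψ y ≤ H y)
    (hs : 0 ≤ s) (hst : s ≤ t) (ht : DriftIntegrable C P X t) :
    ∫ ω, ψ (Y t ω) ∂P - ∫ ω, ψ (Y s ω) ∂P ≤ ∫ r in Set.Ioc s t, ∫ ω, H (Y r ω) ∂P := by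
  have hjoint : StronglyMeasurable (Function.uncurry fun r ω => H (Y r ω)) :=
    (hH.measurable.comp (measurable_uncurry_of_continuous_of_measurable
      (u := Y) hS.contY hS.measY)).stronglyMeasurable
  have hprod : Integrable (Function.uncurry fun r ω => H (Y r ω))
      ((volume.restrict (Set.Ioc s t)).prod P) :=
    Integrable.of_bound hjoint.aestronglyMeasurable B (ae_of_all _ fun _ => hHB _)
  rw [hS.integral_fast_sub h hψ hs hst ht, integral_integral_swap hprod]
  refine integral_mono (hS.integrable_setIntegral_fastGen h hψ hs hst ht)
    hprod.integral_prod_right fun ω => ?_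
  refine setIntegral_mono_on ((hS.integrableOn_fastGen h hψ ht ω).mono_set
      (Set.Ioc_subset_Ioc_left hs)) ?_ measurableSet_Ioc fun r hr =>
    hle _ _ _ (hS.lawP2X r (hs.trans hr.1.le))
  exact Integrable.of_bound (hH.comp (hS.contY ω)).aestronglyMeasurable B
    (ae_of_all _ fun _ => hHB _)

end IsSFSolution

/-! ### The Lyapunov inequality -/

theorem exists_rpow_le_add_mul_rpow {s t η : ℝ} (hst : s < t) (hη : 0 < η) :
    ∃ c : ℝ, 0 ≤ c ∧ ∀ r : ℝ, 1 ≤ r → r ^ s ≤ c + η * r ^ t := by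
  obtain ⟨r₀, hr₀⟩ := eventually_atTop.1
    ((tendsto_rpow_neg_atTop (sub_pos.2 hst)).eventually_le_const hη)
  refine ⟨(max r₀ 1) ^ |s|, by positivity, fun r hr => ?_⟩
  have hr0 : 0 < r := by linarith
  rcases le_total r r₀ with hle | hle
  · have hmax : r ^ s ≤ (max r₀ 1) ^ |s| :=
      (Real.rpow_le_rpow_of_exponent_le hr (le_abs_self s)).trans
        (Real.rpow_le_rpow hr0.le (hle.trans (le_max_left _ _)) (abs_nonneg s))
    exact hmax.trans (le_add_of_nonneg_right (by positivity))
  · calc r ^ s = r ^ (-(t - s)) * r ^ t := by rw [← Real.rpow_add hr0]; congr 1; ring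
      _ ≤ η * r ^ t := by gcongr; exact hr₀ r hle
      _ ≤ (max r₀ 1) ^ |s| + η * r ^ t := le_add_of_nonneg_left (by positivity)

namespace SA12

variable {n m d : ℕ} {C : Coeffs n m d} (h : SA12 C)
include h

theorem exists_norm_g_sq_le {η : ℝ} (hη : 0 < η) :
    ∃ c : ℝ, 0 ≤ c ∧ ∀ x μ y, memP2 μ → ‖C.g x μ y‖ ^ 2 ≤ c + η * ‖y‖ ^ 2 := by
  obtain ⟨c, hc0, hc⟩ := exists_rpow_le_add_mul_rpow h.hς.2
    (η := η / (4 * h.CG ^ 2 + 1)) (by positivity)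
  refine ⟨4 * h.CG ^ 2 * c + η, by positivity, fun x μ y hμ => ?_⟩
  set w := 1 + ‖y‖ ^ 2
  have hw : 1 ≤ w := le_add_of_nonneg_right (sq_nonneg _)
  have hpow : (‖y‖ ^ h.ς) ^ 2 ≤ w ^ h.ς := by
    rw [Real.rpow_pow_comm (norm_nonneg y)]
    gcongr
    exacts [h.hς.1.le, le_add_of_nonneg_left zero_le_one]
  have hone : 1 ≤ w ^ h.ς := Real.one_le_rpow hw h.hς.1.le
  calc ‖C.g x μ y‖ ^ 2 ≤ (h.CG * (1 + ‖y‖ ^ h.ς)) ^ 2 := by gcongr; exact h.growthg x μ y hμ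
    _ = h.CG ^ 2 * (1 + ‖y‖ ^ h.ς) ^ 2 := mul_pow _ _ _
    _ ≤ h.CG ^ 2 * (4 * w ^ h.ς) := by
      gcongr
      nlinarith [sq_nonneg (1 - ‖y‖ ^ h.ς)]
    _ ≤ h.CG ^ 2 * (4 * (c + η / (4 * h.CG ^ 2 + 1) * w)) := by
      gcongr
      simpa using hc w hw
    _ = 4 * h.CG ^ 2 * c + η * w * (4 * h.CG ^ 2 / (4 * h.CG ^ 2 + 1)) := by ring
    _ ≤ 4 * h.CG ^ 2 * c + η * w * 1 := by
      gcongr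
      exact div_le_one_of_le₀ (by linarith) (by positivity)
    _ = 4 * h.CG ^ 2 * c + η + η * ‖y‖ ^ 2 := by simp only [w]; ring

theorem two_mul_inner_f_le {μ : Measure (Vec n)} (hμ : memP2 μ) (x : Vec n) (y : Vec m) :
    2 * ⟪C.f x μ y, y⟫ ≤ 8 * h.CG ^ 2 / h.γ - 7 * h.γ / 8 * ‖y‖ ^ 2 := by
  have hγ := h.hγ
  have hf0 : ‖C.f x μ 0‖ ≤ h.CG := by
    have hsum := h.growth x μ 0 hμ
    rw [norm_zero, add_zero, mul_one] at hsum
    linarith [norm_nonneg (C.K x μ 0), norm_nonneg (C.h x μ 0), norm_nonneg (C.σ x μ 0)]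
  have hinner : ⟪C.f x μ 0, y⟫ ≤ h.CG * ‖y‖ :=
    (real_inner_le_norm _ _).trans (mul_le_mul_of_nonneg_right hf0 (norm_nonneg y))
  have hyoung : 2 * (h.CG * ‖y‖) ≤ 8 * h.CG ^ 2 / h.γ + h.γ / 8 * ‖y‖ ^ 2 := by
    have hsq : 0 ≤ (8 * h.CG - h.γ * ‖y‖) ^ 2 / (8 * h.γ) := by positivity
    have hexp : (8 * h.CG - h.γ * ‖y‖) ^ 2 / (8 * h.γ) =
        8 * h.CG ^ 2 / h.γ + h.γ / 8 * ‖y‖ ^ 2 - 2 * (h.CG * ‖y‖) := by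
      field_simp
      ring
    linarith
  have hdissip := h.dissip x μ y 0 hμ
  rw [sub_zero, inner_sub_left] at hdissip
  linarith [sq_nonneg ‖C.g x μ y - C.g x μ 0‖]

theorem inner_h_le {μ : Measure (Vec n)} (hμ : memP2 μ) (x : Vec n) (y : Vec m) :
    ⟪C.h x μ y, y⟫ ≤ |h.CG| * (1 + 2 * ‖y‖ ^ 2) := by
  have hh : ‖C.h x μ y‖ ≤ |h.CG| * (1 + ‖y‖) := by
    refine le_trans ?_ ((h.growth x μ y hμ).trans
      (mul_le_mul_of_nonneg_right (le_abs_self _) (by positivity)))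
    linarith [norm_nonneg (C.K x μ y), norm_nonneg (C.f x μ y), norm_nonneg (C.σ x μ y)]
  calc ⟪C.h x μ y, y⟫ ≤ ‖C.h x μ y‖ * ‖y‖ := real_inner_le_norm _ _
    _ ≤ |h.CG| * (1 + ‖y‖) * ‖y‖ := by gcongr
    _ = |h.CG| * ((1 + ‖y‖) * ‖y‖) := mul_assoc _ _ _
    _ ≤ |h.CG| * (1 + 2 * ‖y‖ ^ 2) := by
      gcongr
      nlinarith [sq_nonneg (1 - ‖y‖)]

theorem exists_drift_le {T : ℝ} (hT : 0 ≤ T) :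
    ∃ A : ℝ, 0 ≤ A ∧ ∃ δ : ℝ, 0 < δ ∧ ∀ s : ℝ, 0 ≤ s → s ≤ δ → ∀ x μ y, memP2 μ →
      2 * ⟪C.f x μ y, y⟫ + 2 * (s * ⟪C.h x μ y, y⟫) + T * ‖C.g x μ y‖ ^ 2 ≤
        A - h.γ / 2 * ‖y‖ ^ 2 := by
  have hγ := h.hγ
  obtain ⟨c, hc0, hc⟩ := h.exists_norm_g_sq_le (η := h.γ / (8 * (T + 1))) (by positivity)
  refine ⟨8 * h.CG ^ 2 / h.γ + h.γ / 8 + T * c, by positivity, h.γ / (16 * (|h.CG| + 1)),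
    by positivity, fun s hs0 hs x μ y hμ => ?_⟩
  have hh : s * ⟪C.h x μ y, y⟫ ≤ h.γ / 16 * (1 + 2 * ‖y‖ ^ 2) := by
    calc s * ⟪C.h x μ y, y⟫ ≤ s * (|h.CG| * (1 + 2 * ‖y‖ ^ 2)) := by
          gcongr
          exact h.inner_h_le hμ x y
      _ = s * |h.CG| * (1 + 2 * ‖y‖ ^ 2) := (mul_assoc _ _ _).symm
      _ ≤ h.γ / (16 * (|h.CG| + 1)) * (|h.CG| + 1) * (1 + 2 * ‖y‖ ^ 2) := by gcongr; linarith
      _ = h.γ / 16 * (1 + 2 * ‖y‖ ^ 2) := by field_simp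
  have hg : T * ‖C.g x μ y‖ ^ 2 ≤ T * c + h.γ / 8 * ‖y‖ ^ 2 := by
    calc T * ‖C.g x μ y‖ ^ 2 ≤ T * (c + h.γ / (8 * (T + 1)) * ‖y‖ ^ 2) := by
          gcongr
          exact hc x μ y hμ
      _ = T * c + h.γ / (8 * (T + 1)) * T * ‖y‖ ^ 2 := by ring
      _ ≤ T * c + h.γ / (8 * (T + 1)) * (T + 1) * ‖y‖ ^ 2 := by gcongr; linarith
      _ = T * c + h.γ / 8 * ‖y‖ ^ 2 := by field_simp
  linarith [h.two_mul_inner_f_le hμ x y]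

end SA12

section FastGenerator

variable {n m d : ℕ} (C : Coeffs n m d) (ε : ℝ) (μ : Measure (Vec n)) (x : Vec n)

theorem fastGen_comp {Φ : ℝ → ℝ} {u : Vec m → ℝ} {y : Vec m} (hΦ : ContDiffAt ℝ 2 Φ (u y))
    (hu : ContDiff ℝ 2 u) :
    fastGen C ε μ x (fun y' => Φ (u y')) y = deriv Φ (u y) * fastGen C ε μ x u y +
      1 / (2 * ε) * (deriv (deriv Φ) (u y) * ‖adj (C.g x μ y) (gradient u y)‖ ^ 2) := by
  rw [fastGen, fastGen, hess_comp hΦ hu, (hasGradientAt_comp (hΦ.differentiableAt two_ne_zero)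
    (hu.differentiable two_ne_zero y)).gradient, ContinuousLinearMap.comp_add,
    ContinuousLinearMap.comp_smul, ContinuousLinearMap.comp_smul, ← traceCLM_apply, map_add,
    map_smul, map_smul, traceCLM_apply, traceCLM_apply, trCLM_comp_outer_self,
    real_inner_smul_right]
  simp only [smul_eq_mul]
  ring

theorem fastGen_norm_sq (hε : 0 < ε) (y : Vec m) :
    fastGen C ε μ x (fun y' => ‖y'‖ ^ 2) y = ε⁻¹ * (2 * ⟪C.f x μ y, y⟫ +
      2 * (√ε * ⟪C.h x μ y, y⟫) + trCLM ((C.g x μ y).comp (adj (C.g x μ y)))) := by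
  have hsqrt : (√ε)⁻¹ = ε⁻¹ * √ε := by
    rw [← Real.sqrt_div_self, div_eq_inv_mul]
  rw [fastGen, gradient_norm_sq, hess_norm_sq, ContinuousLinearMap.comp_smul,
    ContinuousLinearMap.comp_id, ← traceCLM_apply, map_smul, traceCLM_apply, hsqrt]
  simp only [inner_add_left, real_inner_smul_left, real_inner_smul_right, smul_eq_mul]
  field_simp

end FastGenerator

/-- A Foster–Lyapunov function for the fast motion: `V` is proper and its drift under the fast part
of the generator is at most `κ (A - c V)`, whatever the slow position and law. -/
structure IsLyapunov {n m d : ℕ} (C : Coeffs n m d) (ε : ℝ) (V : Vec m → ℝ) (κ A c : ℝ) :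
    Prop where
  contDiff : ContDiff ℝ 2 V
  nonneg : ∀ y, 0 ≤ V y
  tendsto_atTop : Tendsto V (cocompact (Vec m)) atTop
  rate_nonneg : 0 ≤ κ
  const_nonneg : 0 ≤ A
  decay_pos : 0 < c
  fastGen_le : ∀ μ x y, memP2 μ → fastGen C ε μ x V y ≤ κ * (A - c * V y)

/-- The Lyapunov function `(1 + |y|²)^{p/2}`, a smooth substitute for `|y|^p`. -/
def lyapunov {m : ℕ} (p : ℝ) (y : Vec m) : ℝ :=
  (1 + ‖y‖ ^ 2) ^ (p / 2)

section Lyapunov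

variable {m : ℕ} {p : ℝ}

theorem one_add_norm_sq_pos (y : Vec m) : 0 < 1 + ‖y‖ ^ 2 := by positivity

theorem contDiff_lyapunov (p : ℝ) : ContDiff ℝ 2 (lyapunov p : Vec m → ℝ) :=
  (contDiff_const.add (contDiff_norm_sq ℝ)).rpow_const_of_ne fun y => (one_add_norm_sq_pos y).ne'

theorem lyapunov_nonneg (p : ℝ) (y : Vec m) : 0 ≤ lyapunov p y :=
  Real.rpow_nonneg (one_add_norm_sq_pos y).le _

theorem norm_rpow_le_lyapunov (hp : 0 ≤ p) (y : Vec m) : ‖y‖ ^ p ≤ lyapunov p y := by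
  calc ‖y‖ ^ p = (‖y‖ ^ 2) ^ (p / 2) := by
        rw [← Real.rpow_natCast, ← Real.rpow_mul (norm_nonneg y)]
        congr 1
        push_cast
        ring
    _ ≤ lyapunov p y := Real.rpow_le_rpow (sq_nonneg _) (by linarith) (by linarith)

theorem lyapunov_le (hp : 0 ≤ p) (y : Vec m) : lyapunov p y ≤ 2 ^ p * (1 + ‖y‖ ^ p) := by
  have hy := norm_nonneg y
  have hmax : 1 + ‖y‖ ^ 2 ≤ (2 * max 1 ‖y‖) ^ 2 := by
    nlinarith [le_max_left 1 ‖y‖, le_max_right 1 ‖y‖]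
  calc lyapunov p y ≤ ((2 * max 1 ‖y‖) ^ 2) ^ (p / 2) := by unfold lyapunov; gcongr
    _ = 2 ^ p * (max 1 ‖y‖) ^ p := by
      rw [← Real.rpow_natCast, ← Real.rpow_mul (by positivity),
        ← Real.mul_rpow zero_le_two (by positivity)]
      congr 1
      push_cast
      ring
    _ ≤ 2 ^ p * (1 + ‖y‖ ^ p) := by
      gcongr
      rcases max_choice 1 ‖y‖ with hc | hc <;> rw [hc]
      · simpa using Real.rpow_nonneg hy p
      · linarith

theorem tendsto_lyapunov (hp : 0 < p) :
    Tendsto (lyapunov p : Vec m → ℝ) (cocompact (Vec m)) atTop :=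
  tendsto_atTop_mono (norm_rpow_le_lyapunov hp.le)
    ((tendsto_rpow_atTop hp).comp (tendsto_norm_cocompact_atTop (E := Vec m)))

theorem deriv_one_add_rpow (a : ℝ) :
    deriv (fun q : ℝ => (1 + q) ^ a) = fun q => a * (1 + q) ^ (a - 1) := by
  ext q
  rw [deriv_comp_const_add (fun r : ℝ => r ^ a), Real.deriv_rpow_const]

theorem secondOrder_lyapunov_le (hp : 0 ≤ p) {k : ℕ} (g : Mat m k) (y : Vec m) :
    p / 2 * ((p / 2 - 1) * (1 + ‖y‖ ^ 2) ^ (p / 2 - 1 - 1)) * ‖adj g ((2 : ℝ) • y)‖ ^ 2 ≤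
      2 * (p / 2 * (1 + ‖y‖ ^ 2) ^ (p / 2 - 1) * (|p - 2| * ‖g‖ ^ 2)) := by
  have hw := one_add_norm_sq_pos y
  set w := 1 + ‖y‖ ^ 2
  have hadj : ‖adj g ((2 : ℝ) • y)‖ ^ 2 ≤ 4 * (‖g‖ ^ 2 * w) := by
    calc ‖adj g ((2 : ℝ) • y)‖ ^ 2 ≤ (‖adj g‖ * ‖(2 : ℝ) • y‖) ^ 2 := by
          gcongr
          exact (adj g).le_opNorm _
      _ = 4 * (‖g‖ ^ 2 * ‖y‖ ^ 2) := by rw [norm_adj, norm_smul, Real.norm_two]; ring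
      _ ≤ 4 * (‖g‖ ^ 2 * w) := by gcongr; exact le_add_of_nonneg_left zero_le_one
  have hexp : p / 2 - 1 ≤ |p - 2| / 2 := by linarith [le_abs_self (p - 2)]
  calc p / 2 * ((p / 2 - 1) * w ^ (p / 2 - 1 - 1)) * ‖adj g ((2 : ℝ) • y)‖ ^ 2
      ≤ p / 2 * (|p - 2| / 2 * w ^ (p / 2 - 1 - 1)) * (4 * (‖g‖ ^ 2 * w)) := by gcongr
    _ = 2 * (p / 2 * (w ^ (p / 2 - 1 - 1) * w) * (|p - 2| * ‖g‖ ^ 2)) := by ring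
    _ = 2 * (p / 2 * w ^ (p / 2 - 1) * (|p - 2| * ‖g‖ ^ 2)) := by
      rw [← Real.rpow_add_one hw.ne', sub_add_cancel]

theorem fastGen_lyapunov_le {n d : ℕ} (C : Coeffs n m d) {ε : ℝ} (hε : 0 < ε) (hp : 0 ≤ p)
    (μ : Measure (Vec n)) (x : Vec n) (y : Vec m) :
    fastGen C ε μ x (lyapunov p) y ≤ ε⁻¹ * (p / 2 * (1 + ‖y‖ ^ 2) ^ (p / 2 - 1) *
      (2 * ⟪C.f x μ y, y⟫ + 2 * (√ε * ⟪C.h x μ y, y⟫) +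
        (‖traceCLM m‖ + |p - 2|) * ‖C.g x μ y‖ ^ 2)) := by
  have hw := one_add_norm_sq_pos y
  have hΦ : ContDiffAt ℝ 2 (fun q : ℝ => (1 + q) ^ (p / 2)) (‖y‖ ^ 2) :=
    (contDiffAt_const.add contDiffAt_id).rpow_const_of_ne hw.ne'
  have htr : trCLM ((C.g x μ y).comp (adj (C.g x μ y))) ≤ ‖traceCLM m‖ * ‖C.g x μ y‖ ^ 2 := by
    rw [← traceCLM_apply]
    refine (Real.le_norm_self _).trans ((traceCLM m).le_opNorm_of_le ?_)
    exact (ContinuousLinearMap.opNorm_comp_le _ _).trans_eq (by rw [norm_adj, sq])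
  have hsecond := secondOrder_lyapunov_le hp (C.g x μ y) y
  set D := p / 2 * (1 + ‖y‖ ^ 2) ^ (p / 2 - 1)
  have : 0 ≤ D := by positivity
  change fastGen C ε μ x (fun y' => (fun q : ℝ => (1 + q) ^ (p / 2)) (‖y'‖ ^ 2)) y ≤ _
  rw [fastGen_comp C ε μ x hΦ (contDiff_norm_sq ℝ), fastGen_norm_sq C ε μ x hε, gradient_norm_sq,
    deriv_one_add_rpow, deriv_const_mul_field, deriv_one_add_rpow]
  calc _ ≤ D * (ε⁻¹ * (2 * ⟪C.f x μ y, y⟫ + 2 * (√ε * ⟪C.h x μ y, y⟫) +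
        ‖traceCLM m‖ * ‖C.g x μ y‖ ^ 2)) +
        1 / (2 * ε) * (2 * (D * (|p - 2| * ‖C.g x μ y‖ ^ 2))) := by
        gcongr
    _ = _ := by
      field_simp
      ring

end Lyapunov

theorem SA12.exists_isLyapunov {n m d : ℕ} {C : Coeffs n m d} (h : SA12 C) {p : ℝ} (hp : 0 < p) :
    ∃ A c δ : ℝ, 0 < δ ∧ ∀ ε, 0 < ε → √ε ≤ δ → IsLyapunov C ε (lyapunov p) ε⁻¹ A c := by
  have hγ := h.hγ
  obtain ⟨A, hA, δ, hδ, hdrift⟩ := h.exists_drift_le (T := ‖traceCLM m‖ + |p - 2|) (by positivity)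
  obtain ⟨B, hB, hpow⟩ := exists_rpow_le_add_mul_rpow (sub_one_lt (p / 2))
    (η := h.γ / 4 / (A + h.γ / 2)) (by positivity)
  refine ⟨p / 2 * ((A + h.γ / 2) * B), p / 2 * (h.γ / 4), δ, hδ, fun ε hε hεδ =>
    ⟨contDiff_lyapunov p, lyapunov_nonneg p, tendsto_lyapunov hp, by positivity, by positivity,
      by positivity, fun μ x y hμ => ?_⟩⟩
  have hw := one_add_norm_sq_pos y
  refine (fastGen_lyapunov_le C hε hp.le μ x y).trans ?_
  rw [lyapunov]
  set w := 1 + ‖y‖ ^ 2 with hw_def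
  have hw1 : 1 ≤ w := le_add_of_nonneg_right (sq_nonneg _)
  have hmul : w ^ (p / 2 - 1) * w = w ^ (p / 2) := by
    rw [← Real.rpow_add_one hw.ne', sub_add_cancel]
  gcongr ε⁻¹ * ?_
  calc _ ≤ p / 2 * w ^ (p / 2 - 1) * (A - h.γ / 2 * ‖y‖ ^ 2) := by
        gcongr
        exact hdrift _ (Real.sqrt_nonneg ε) hεδ x μ y hμ
    _ = p / 2 * ((A + h.γ / 2) * w ^ (p / 2 - 1) - h.γ / 2 * (w ^ (p / 2 - 1) * w)) := by
      rw [hw_def]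
      ring
    _ ≤ p / 2 * ((A + h.γ / 2) * (B + h.γ / 4 / (A + h.γ / 2) * w ^ (p / 2)) -
        h.γ / 2 * w ^ (p / 2)) := by
      rw [hmul]
      gcongr
      exact hpow w hw1
    _ = p / 2 * ((A + h.γ / 2) * B) - p / 2 * (h.γ / 4) * w ^ (p / 2) := by
      field_simp
      ring

/-! ### Moments while the slow drift is integrable -/

/-- A smooth antitone cutoff, equal to `1` for `v ≤ R + 1` and to `0` for `v ≥ 2 (R + 1)`. -/
def plateau (R : ℕ) (v : ℝ) : ℝ :=
  Real.smoothTransition (2 - v / (R + 1))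

/-- The concave truncation of the identity at height `R` whose derivative is `plateau R`. -/
def truncate (R : ℕ) (v : ℝ) : ℝ :=
  ∫ s in (0 : ℝ)..v, plateau R s

section Truncate

variable {R : ℕ} {v : ℝ}

theorem contDiff_plateau (R : ℕ) : ContDiff ℝ 1 (plateau R) :=
  Real.smoothTransition.contDiff.comp (contDiff_const.sub (contDiff_id.div_const _))

theorem plateau_nonneg (R : ℕ) (v : ℝ) : 0 ≤ plateau R v := Real.smoothTransition.nonneg _

theorem plateau_le_one (R : ℕ) (v : ℝ) : plateau R v ≤ 1 := Real.smoothTransition.le_one _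

theorem antitone_plateau (R : ℕ) : Antitone (plateau R) := fun v w hvw =>
  Real.smoothTransition.monotone (by gcongr)

theorem plateau_of_le (hv : v ≤ R + 1) : plateau R v = 1 :=
  Real.smoothTransition.one_of_one_le (by
    have := div_le_one_of_le₀ hv (by positivity)
    linarith)

theorem plateau_of_ge (hv : 2 * (R + 1) ≤ v) : plateau R v = 0 :=
  Real.smoothTransition.zero_of_nonpos (sub_nonpos.2 ((le_div_iff₀ (by positivity)).2 hv))

theorem tendsto_plateau (v : ℝ) : Tendsto (plateau · v) atTop (𝓝 1) := by
  refine tendsto_const_nhds.congr' ?_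
  filter_upwards [eventually_ge_atTop ⌈v⌉₊] with R hR
  exact (plateau_of_le ((Nat.ceil_le.1 hR).trans (by linarith))).symm

theorem hasDerivAt_truncate (R : ℕ) (v : ℝ) : HasDerivAt (truncate R) (plateau R v) v :=
  ((contDiff_plateau R).continuous.integral_hasStrictDerivAt 0 v).hasDerivAt

theorem deriv_truncate (R : ℕ) : deriv (truncate R) = plateau R :=
  funext fun v => (hasDerivAt_truncate R v).deriv

theorem contDiff_truncate (R : ℕ) : ContDiff ℝ 2 (truncate R) := by
  rw [← one_add_one_eq_two, contDiff_succ_iff_deriv, deriv_truncate]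
  exact ⟨fun v => (hasDerivAt_truncate R v).differentiableAt, by simp, contDiff_plateau R⟩

theorem truncate_nonneg (R : ℕ) (hv : 0 ≤ v) : 0 ≤ truncate R v :=
  intervalIntegral.integral_nonneg hv fun s _ => plateau_nonneg R s

theorem truncate_le_self (R : ℕ) (hv : 0 ≤ v) : truncate R v ≤ v := by
  simpa [truncate] using intervalIntegral.integral_mono_on hv
    ((contDiff_plateau R).continuous.intervalIntegrable (μ := volume) 0 v)
    intervalIntegrable_const fun s _ => plateau_le_one R s

theorem truncate_of_ge (hv : 2 * (R + 1) ≤ v) : truncate R v = truncate R (2 * (R + 1)) := by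
  have hint := (contDiff_plateau R).continuous.intervalIntegrable (μ := volume)
  have htail : ∫ s in (2 * (R + 1) : ℝ)..v, plateau R s = ∫ _ in (2 * (R + 1) : ℝ)..v, (0 : ℝ) :=
    intervalIntegral.integral_congr fun s hs => plateau_of_ge (Set.uIcc_of_le hv ▸ hs).1
  rw [truncate, ← intervalIntegral.integral_add_adjacent_intervals (hint 0 (2 * (R + 1)))
    (hint _ v), htail, intervalIntegral.integral_zero, add_zero, truncate]

theorem truncate_le (R : ℕ) (hv : 0 ≤ v) : truncate R v ≤ 2 * (R + 1) := by
  rcases le_total v (2 * (R + 1)) with hle | hle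
  · exact (truncate_le_self R hv).trans hle
  · rw [truncate_of_ge hle]
    exact truncate_le_self R (by positivity)

theorem tendsto_truncate (hv : 0 ≤ v) : Tendsto (truncate · v) atTop (𝓝 v) := by
  refine tendsto_const_nhds.congr' ?_
  filter_upwards [eventually_ge_atTop ⌈v⌉₊] with R hR
  have hvR : v ≤ R := Nat.ceil_le.1 hR
  rw [truncate, intervalIntegral.integral_congr (g := fun _ => 1)]
  · simp
  · intro s hs
    rw [Set.uIcc_of_le hv] at hs
    exact plateau_of_le (by linarith [hs.2])

end Truncate

namespace IsLyapunov

variable {n m d : ℕ} {C : Coeffs n m d} {ε : ℝ} {V : Vec m → ℝ} {κ A c : ℝ}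

theorem testFun_truncate (hV : IsLyapunov C ε V κ A c) (R : ℕ) :
    TestFun fun y => truncate R (V y) - truncate R (2 * (R + 1)) := by
  refine ⟨((contDiff_truncate R).comp hV.contDiff).sub contDiff_const, ?_⟩
  rw [hasCompactSupport_iff_eventuallyEq, coclosedCompact_eq_cocompact]
  filter_upwards [hV.tendsto_atTop.eventually_ge_atTop (2 * (R + 1))] with y hy
  exact sub_eq_zero.2 (truncate_of_ge hy)

theorem fastGen_truncate_le (hV : IsLyapunov C ε V κ A c) (hε : 0 ≤ ε) (R : ℕ)
    {μ : Measure (Vec n)} (hμ : memP2 μ) (x : Vec n) (y : Vec m) :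
    fastGen C ε μ x (fun y' => truncate R (V y') - truncate R (2 * (R + 1))) y ≤
      plateau R (V y) * (κ * (A - c * V y)) := by
  have hderiv : deriv (fun v => truncate R v - truncate R (2 * (R + 1))) = plateau R := by
    ext v
    rw [deriv_sub_const, deriv_truncate]
  have hconcave : deriv (plateau R) (V y) *
      ‖adj (C.g x μ y) (gradient V y)‖ ^ 2 ≤ 0 :=
    mul_nonpos_of_nonpos_of_nonneg (antitone_plateau R).deriv_nonpos (sq_nonneg _)
  rw [fastGen_comp C ε μ x (Φ := fun v => truncate R v - truncate R (2 * (R + 1)))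
    ((contDiff_truncate R).sub contDiff_const).contDiffAt hV.contDiff, hderiv]
  have := mul_nonpos_of_nonneg_of_nonpos (by positivity : 0 ≤ 1 / (2 * ε)) hconcave
  have := mul_le_mul_of_nonneg_left (hV.fastGen_le μ x y hμ) (plateau_nonneg R (V y))
  linarith

theorem abs_plateau_mul_le (hV : IsLyapunov C ε V κ A c) (R : ℕ) (y : Vec m) :
    |plateau R (V y) * (κ * (A - c * V y))| ≤ κ * (A + c * (2 * (R + 1))) := by
  have hκ := hV.rate_nonneg
  have hA := hV.const_nonneg
  have hc := hV.decay_pos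
  rcases le_total (2 * ((R : ℝ) + 1)) (V y) with hy | hy
  · rw [plateau_of_ge hy, zero_mul, abs_zero]
    positivity
  · have hV0 := hV.nonneg y
    rw [abs_mul, abs_mul, abs_of_nonneg (plateau_nonneg R _), abs_of_nonneg hκ]
    refine (mul_le_of_le_one_left (by positivity) (plateau_le_one R _)).trans ?_
    gcongr
    refine (abs_sub _ _).trans ?_
    rw [abs_of_nonneg hA, abs_of_nonneg (by positivity)]
    gcongr

section Solution

variable {Ω : Type} [mΩ : MeasurableSpace Ω] {P : Measure Ω} [IsProbabilityMeasure P]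
  {ℱ : Filtration ℝ mΩ} {X : ℝ → Ω → Vec n} {Y : ℝ → Ω → Vec m} {ξ : Ω → Vec n} {ζ : Ω → Vec m}
  {s t : ℝ}

omit [IsProbabilityMeasure P] in
theorem aestronglyMeasurable_comp (hV : IsLyapunov C ε V κ A c)
    (hS : IsSFSolution C ε P ℱ X Y ξ ζ) (t : ℝ) : AEStronglyMeasurable (fun ω => V (Y t ω)) P :=
  (hV.contDiff.continuous.measurable.comp (hS.measY t)).aestronglyMeasurable

theorem integrable_truncate (hV : IsLyapunov C ε V κ A c) (hS : IsSFSolution C ε P ℱ X Y ξ ζ)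
    (R : ℕ) (t : ℝ) : Integrable (fun ω => truncate R (V (Y t ω))) P :=
  .of_bound ((contDiff_truncate R).continuous.comp_aestronglyMeasurable
    (hV.aestronglyMeasurable_comp hS t)) (2 * (R + 1)) (ae_of_all _ fun ω => by
      rw [Real.norm_of_nonneg (truncate_nonneg R (hV.nonneg _))]
      exact truncate_le R (hV.nonneg _))

theorem integral_truncate_sub_le (hV : IsLyapunov C ε V κ A c)
    (hS : IsSFSolution C ε P ℱ X Y ξ ζ) (h : SA12 C) (hε : 0 ≤ ε) (R : ℕ) (hs : 0 ≤ s)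
    (hst : s ≤ t) (ht : DriftIntegrable C P X t) :
    ∫ ω, truncate R (V (Y t ω)) ∂P - ∫ ω, truncate R (V (Y s ω)) ∂P ≤
      ∫ r in Set.Ioc s t, ∫ ω, plateau R (V (Y r ω)) * (κ * (A - c * V (Y r ω))) ∂P := by
  have hcont : Continuous fun y => plateau R (V y) * (κ * (A - c * V y)) := by
    have := (contDiff_plateau R).continuous
    have := hV.contDiff.continuous
    fun_prop
  have hdynkin := hS.integral_fast_sub_le h (hV.testFun_truncate R) hcont (hV.abs_plateau_mul_le R)
    (fun μ x y hμ => hV.fastGen_truncate_le hε R hμ x y) hs hst ht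
  rwa [integral_sub (hV.integrable_truncate hS R t) (integrable_const _),
    integral_sub (hV.integrable_truncate hS R s) (integrable_const _),
    sub_sub_sub_cancel_right] at hdynkin

theorem integrable_and_integral_le_add (hV : IsLyapunov C ε V κ A c)
    (hS : IsSFSolution C ε P ℱ X Y ξ ζ) (h : SA12 C) (hε : 0 ≤ ε) (hs : 0 ≤ s) (hst : s ≤ t)
    (ht : DriftIntegrable C P X t) (hi : Integrable (fun ω => V (Y s ω)) P) :
    Integrable (fun ω => V (Y t ω)) P ∧
      ∫ ω, V (Y t ω) ∂P ≤ ∫ ω, V (Y s ω) ∂P + κ * A * (t - s) := by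
  have hκA : 0 ≤ κ * A := mul_nonneg hV.rate_nonneg hV.const_nonneg
  refine integrable_and_integral_le_of_tendsto (hV.integrable_truncate hS · t)
    (fun R ω => truncate_nonneg R (hV.nonneg _)) (fun R => ?_)
    (ae_of_all _ fun ω => tendsto_truncate (hV.nonneg _))
  have hs_le : ∫ ω, truncate R (V (Y s ω)) ∂P ≤ ∫ ω, V (Y s ω) ∂P :=
    integral_mono (hV.integrable_truncate hS R s) hi fun ω => truncate_le_self R (hV.nonneg _)
  have hle : ∀ y, plateau R (V y) * (κ * (A - c * V y)) ≤ κ * A := fun y => by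
    have hdrift : κ * (A - c * V y) ≤ κ * A :=
      mul_le_mul_of_nonneg_left (sub_le_self _ (mul_nonneg hV.decay_pos.le (hV.nonneg y)))
        hV.rate_nonneg
    exact (mul_le_mul_of_nonneg_left hdrift (plateau_nonneg R _)).trans
      (mul_le_of_le_one_left hκA (plateau_le_one R _))
  have hdrift_le : ∫ r in Set.Ioc s t, ∫ ω, plateau R (V (Y r ω)) * (κ * (A - c * V (Y r ω))) ∂P ≤
      κ * A * (t - s) :=
    setIntegral_Ioc_le_const hκA hst fun r _ => by
      simpa using integral_le_const_mul_univ hκA (ae_of_all P fun ω => hle (Y r ω))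
  linarith [hV.integral_truncate_sub_le hS h hε R hs hst ht]

theorem tendsto_integral_truncate (hV : IsLyapunov C ε V κ A c)
    (hS : IsSFSolution C ε P ℱ X Y ξ ζ) (hi : Integrable (fun ω => V (Y t ω)) P) :
    Tendsto (fun R => ∫ ω, truncate R (V (Y t ω)) ∂P) atTop (𝓝 (∫ ω, V (Y t ω) ∂P)) := by
  refine tendsto_integral_of_dominated_convergence _
    (fun R => (hV.integrable_truncate hS R t).aestronglyMeasurable) hi
    (fun R => ae_of_all _ fun ω => ?_) (ae_of_all _ fun ω => tendsto_truncate (hV.nonneg _))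
  rw [Real.norm_of_nonneg (truncate_nonneg R (hV.nonneg _))]
  exact truncate_le_self R (hV.nonneg _)

theorem integrable_uncurry_comp (hV : IsLyapunov C ε V κ A c)
    (hS : IsSFSolution C ε P ℱ X Y ξ ζ) (h : SA12 C) (hε : 0 ≤ ε) (hs : 0 ≤ s)
    (ht : DriftIntegrable C P X t) (hi : Integrable (fun ω => V (Y s ω)) P) :
    Integrable (Function.uncurry fun r ω => V (Y r ω))
      ((volume.restrict (Set.Ioc s t)).prod P) := by
  have hκA : 0 ≤ κ * A := mul_nonneg hV.rate_nonneg hV.const_nonneg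
  have hjoint : StronglyMeasurable (Function.uncurry fun r ω => V (Y r ω)) :=
    (hV.contDiff.continuous.measurable.comp (measurable_uncurry_of_continuous_of_measurable
      (u := Y) hS.contY hS.measY)).stronglyMeasurable
  have hmoment : ∀ r ∈ Set.Ioc s t, _ := fun r hr =>
    hV.integrable_and_integral_le_add hS h hε hs hr.1.le (ht.mono hr.2) hi
  refine (integrable_prod_iff hjoint.aestronglyMeasurable).2
    ⟨(ae_restrict_mem measurableSet_Ioc).mono fun r hr => (hmoment r hr).1, ?_⟩
  refine .of_bound hjoint.norm.integral_prod_right.aestronglyMeasurable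
    (∫ ω, V (Y s ω) ∂P + κ * A * (t - s)) ((ae_restrict_mem measurableSet_Ioc).mono fun r hr => ?_)
  simp only [Function.uncurry_apply_pair, Real.norm_of_nonneg (hV.nonneg _),
    Real.norm_of_nonneg (integral_nonneg fun ω => hV.nonneg (Y r ω))]
  refine (hmoment r hr).2.trans ?_
  gcongr
  exact hr.2

theorem integral_sub_le (hV : IsLyapunov C ε V κ A c) (hS : IsSFSolution C ε P ℱ X Y ξ ζ)
    (h : SA12 C) (hε : 0 ≤ ε) (hs : 0 ≤ s) (hst : s ≤ t) (ht : DriftIntegrable C P X t)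
    (hi : Integrable (fun ω => V (Y s ω)) P) :
    ∫ ω, V (Y t ω) ∂P - ∫ ω, V (Y s ω) ∂P ≤
      ∫ r in Set.Ioc s t, κ * (A - c * ∫ ω, V (Y r ω) ∂P) := by
  have hmoment : ∀ r, s ≤ r → r ≤ t → Integrable (fun ω => V (Y r ω)) P := fun r hsr hrt =>
    (hV.integrable_and_integral_le_add hS h hε hs hsr (ht.mono hrt) hi).1
  have hV_prod := hV.integrable_uncurry_comp hS h hε hs ht hi
  set Q := (volume.restrict (Set.Ioc s t)).prod P
  have hdrift : Integrable (fun z : ℝ × Ω => κ * (A - c * V (Y z.1 z.2))) Q :=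
    ((integrable_const A).sub (hV_prod.const_mul c)).const_mul κ
  have hmeas : ∀ R, AEStronglyMeasurable
      (fun z : ℝ × Ω => plateau R (V (Y z.1 z.2)) * (κ * (A - c * V (Y z.1 z.2)))) Q := fun R =>
    ((contDiff_plateau R).continuous.comp_aestronglyMeasurable hV_prod.aestronglyMeasurable).mul
      hdrift.aestronglyMeasurable
  have hdom : ∀ R (z : ℝ × Ω), ‖plateau R (V (Y z.1 z.2)) * (κ * (A - c * V (Y z.1 z.2)))‖ ≤
      ‖κ * (A - c * V (Y z.1 z.2))‖ := fun R z => by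
    rw [norm_mul, Real.norm_of_nonneg (plateau_nonneg R _)]
    exact mul_le_of_le_one_left (norm_nonneg _) (plateau_le_one R _)
  have hlim : Tendsto (fun R => ∫ r in Set.Ioc s t, ∫ ω,
      plateau R (V (Y r ω)) * (κ * (A - c * V (Y r ω))) ∂P) atTop
      (𝓝 (∫ r in Set.Ioc s t, ∫ ω, κ * (A - c * V (Y r ω)) ∂P)) := by
    have hfubini : ∀ R, _ := fun R => integral_integral
      (f := fun r ω => plateau R (V (Y r ω)) * (κ * (A - c * V (Y r ω))))
      (hdrift.mono (hmeas R) (ae_of_all _ (hdom R)))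
    simp_rw [hfubini, integral_integral (f := fun r ω => κ * (A - c * V (Y r ω))) hdrift]
    refine tendsto_integral_of_dominated_convergence _ hmeas hdrift.norm
      (fun R => ae_of_all _ (hdom R)) (ae_of_all _ fun z => ?_)
    simpa using (tendsto_plateau (V (Y z.1 z.2))).mul_const (κ * (A - c * V (Y z.1 z.2)))
  refine (le_of_tendsto_of_tendsto'
    ((hV.tendsto_integral_truncate hS (hmoment t hst le_rfl)).sub
      (hV.tendsto_integral_truncate hS hi)) hlim
    fun R => hV.integral_truncate_sub_le hS h hε R hs hst ht).trans_eq
      (setIntegral_congr_fun measurableSet_Ioc fun r hr => ?_)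
  simp only [integral_const_mul,
    integral_sub (integrable_const A) ((hmoment r hr.1.le hr.2).const_mul c)]
  simp

theorem integrable_and_integral_le (hV : IsLyapunov C ε V κ A c)
    (hS : IsSFSolution C ε P ℱ X Y ξ ζ) (h : SA12 C) (hε : 0 ≤ ε) {K : ℝ} (ht0 : 0 ≤ t)
    (ht : DriftIntegrable C P X t) (hi : Integrable (fun ω => V (Y 0 ω)) P)
    (hK0 : ∫ ω, V (Y 0 ω) ∂P ≤ K) (hK : A ≤ c * K) :
    Integrable (fun ω => V (Y t ω)) P ∧ ∫ ω, V (Y t ω) ∂P ≤ K := by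
  have hmoment : ∀ r, 0 ≤ r → r ≤ t → Integrable (fun ω => V (Y r ω)) P := fun r h0r hrt =>
    (hV.integrable_and_integral_le_add hS h hε le_rfl h0r (ht.mono hrt) hi).1
  refine ⟨hmoment t ht0 le_rfl, le_of_sub_le_integral_mul_sub (U := fun r => ∫ ω, V (Y r ω) ∂P)
    hV.rate_nonneg hV.const_nonneg hV.decay_pos ht0
    (fun r _ => integral_nonneg fun ω => hV.nonneg _) hK0 hK fun s r hs hsr hrt => ?_⟩
  exact hV.integral_sub_le hS h hε hs hsr (ht.mono hrt) (hmoment s hs (hsr.trans hrt))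

end Solution

end IsLyapunov

/-! ### Freezing after the drift ceases to be integrable -/

/-- A localized coordinate test function: near `q` it is `x i + a`, whose gradient in `x` is the
`i`-th basis vector. The shift `a` allows `η` itself to be recovered as a difference. -/
def localCoord {n m : ℕ} {q : Vec n × Vec m} (η : ContDiffBump q) (i : Fin n) (a : ℝ) (x : Vec n)
    (y : Vec m) : ℝ :=
  η (x, y) * (x i + a)

section LocalCoord

variable {n m : ℕ} {q : Vec n × Vec m} (η : ContDiffBump q) (i : Fin n) (a : ℝ)

theorem testFun2_localCoord : TestFun2 (localCoord η i a) :=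
  ⟨η.contDiff.mul (((EuclideanSpace.proj i : Vec n →L[ℝ] ℝ).contDiff.comp contDiff_fst).add
    contDiff_const), η.hasCompactSupport.mul_right⟩

theorem localCoord_one_sub_zero (x : Vec n) (y : Vec m) :
    localCoord η i 1 x y - localCoord η i 0 x y = η (x, y) := by
  simp only [localCoord]
  ring

theorem gradient_localCoord {x : Vec n} {y : Vec m} (h : (x, y) ∈ Metric.ball q η.rIn) :
    gradient (fun x' => localCoord η i a x' y) x = EuclideanSpace.single i (1 : ℝ) := by
  have heq : (fun x' => localCoord η i a x' y) =ᶠ[𝓝 x] fun x' => x' i + a := by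
    have hcont : Continuous fun x' : Vec n => (x', y) := by fun_prop
    filter_upwards [hcont.continuousAt.eventually (Metric.isOpen_ball.mem_nhds h)] with x' hx'
    rw [localCoord, η.one_of_mem_closedBall (Metric.ball_subset_closedBall hx'), one_mul]
  have hdual : InnerProductSpace.toDual ℝ (Vec n) (EuclideanSpace.single i (1 : ℝ)) =
      (EuclideanSpace.proj i : Vec n →L[ℝ] ℝ) := by
    ext v
    simp [EuclideanSpace.inner_single_left]
  have hcoord : HasGradientAt (fun x' : Vec n => x' i + a) (EuclideanSpace.single i (1 : ℝ)) x := by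
    rw [hasGradientAt_iff_hasFDerivAt, hdual]
    exact (EuclideanSpace.proj i : Vec n →L[ℝ] ℝ).hasFDerivAt.add_const a
  exact (hcoord.congr_of_eventuallyEq heq).gradient

end LocalCoord

theorem exists_integrableOn_Ioc_of_eventuallyEq {E : Type*} [NormedAddCommGroup E] {f g : ℝ → E}
    {τ T : ℝ} (hτT : τ < T) (hf : ∀ s < τ, IntegrableOn f (Set.Ioc 0 s))
    (hg : IntegrableOn g (Set.Ioc 0 T)) (hfg : f =ᶠ[𝓝 τ] g) :
    ∃ S > τ, IntegrableOn f (Set.Ioc 0 S) := by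
  obtain ⟨δ, hδ, hnear⟩ := Metric.eventually_nhds_iff.1 hfg
  refine ⟨min T (τ + δ / 2), lt_min hτT (by linarith), ?_⟩
  have hafter : IntegrableOn f (Set.Ioc (max 0 (τ - δ / 2)) (min T (τ + δ / 2))) := by
    refine (hg.mono_set (Set.Ioc_subset_Ioc (le_max_left _ _) (min_le_left _ _))).congr_fun
      (fun s hs => (hnear ?_).symm) measurableSet_Ioc
    have hs_lower : τ - δ / 2 < s := (le_max_right _ _).trans_lt hs.1
    have hs_upper : s ≤ τ + δ / 2 := hs.2.trans (min_le_right _ _)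
    rw [Real.dist_eq, abs_lt]
    constructor <;> linarith
  refine ((hf (τ - δ / 2) (by linarith)).union hafter).mono_set fun s hs => ?_
  rcases le_or_gt s (τ - δ / 2) with hs_le | hs_gt
  · exact Or.inl ⟨hs.1, hs_le⟩
  · exact Or.inr ⟨max_lt hs.1 hs_gt, hs.2⟩

theorem integrable_of_forall_coord {α : Type*} [MeasurableSpace α] {μ : Measure α} {n : ℕ}
    {f : α → Vec n} (hf : ∀ i, Integrable (fun a => f a i) μ) : Integrable f μ := by
  refine (integrable_finsetSum Finset.univ fun i _ =>
    (hf i).smul_const (EuclideanSpace.single i (1 : ℝ))).congr (ae_of_all _ fun a => ?_)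
  ext k
  simp [Pi.single_apply]

theorem exists_coord_not_integrableOn {n : ℕ} {f : ℝ → Vec n} {τ : ℝ}
    (hf : ∀ t > τ, ¬IntegrableOn f (Set.Ioc 0 t)) :
    ∃ i, ∀ t > τ, ¬IntegrableOn (fun s => f s i) (Set.Ioc 0 t) := by
  by_contra! hcoord
  choose T hT hint using hcoord
  obtain ⟨t, ht, htτ⟩ := ((eventually_all.2 fun i =>
    (Ioc_mem_nhdsGT (hT i) : ∀ᶠ s in 𝓝[>] τ, s ∈ Set.Ioc τ (T i))).and self_mem_nhdsWithin).exists
  exact hf t htτ (integrable_of_forall_coord fun i =>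
    (hint i).mono_set (Set.Ioc_subset_Ioc_right (ht i).2))

theorem ae_eq_of_forall_mem_ball {α E : Type*} [MeasurableSpace α] {μ : Measure α} [MetricSpace E]
    [TopologicalSpace.SeparableSpace E] {f g : α → E}
    (h : ∀ q r, 0 < r → ∀ᵐ a ∂μ, f a ∈ Metric.ball q r → g a ∈ Metric.ball q (2 * r)) :
    g =ᵐ[μ] f := by
  obtain ⟨s, hs_countable, hs_dense⟩ := TopologicalSpace.exists_countable_dense E
  have hball : ∀ᵐ a ∂μ, ∀ q ∈ s, ∀ k : ℕ, f a ∈ Metric.ball q (1 / ((k : ℝ) + 1)) →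
      g a ∈ Metric.ball q (2 * (1 / ((k : ℝ) + 1))) :=
    (ae_ball_iff hs_countable).2 fun q _ => ae_all_iff.2 fun k => h q _ (by positivity)
  filter_upwards [hball] with a ha
  refine dist_le_zero.1 (le_of_forall_pos_le_add fun e he => ?_)
  obtain ⟨k, hk⟩ := exists_nat_one_div_lt (show 0 < e / 3 by positivity)
  obtain ⟨q, hqs, hq⟩ := hs_dense.exists_dist_lt (f a) (ε := 1 / ((k : ℝ) + 1)) (by positivity)
  have hgq := Metric.mem_ball.1 (ha q hqs k hq)
  linarith [dist_triangle_right (g a) (f a) q]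

namespace IsSFSolution

variable {n m d : ℕ} {C : Coeffs n m d} {ε : ℝ} {Ω : Type} [mΩ : MeasurableSpace Ω]
  {P : Measure Ω} [IsProbabilityMeasure P] {ℱ : Filtration ℝ mΩ} {X : ℝ → Ω → Vec n}
  {Y : ℝ → Ω → Vec m} {ξ : Ω → Vec n} {ζ : Ω → Vec m} {φ : Vec n → Vec m → ℝ} {τ t : ℝ} {i : Fin n}

theorem integrableOn_inner_drift (hS : IsSFSolution C ε P ℱ X Y ξ ζ) (h : SA12 C)
    (hφ : TestFun2 φ) {ω : Ω}
    (hgen : IntegrableOn (fun s => genSF C ε (P.map (X s)) φ (X s ω) (Y s ω)) (Set.Ioc 0 t)) :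
    IntegrableOn (fun s => ⟪C.b 0 (P.map (X s)) 0, gradient (fun x' => φ x' (Y s ω)) (X s ω)⟫)
      (Set.Ioc 0 t) := by
  obtain ⟨M, hM⟩ := h.exists_abs_genSF_sub_le ε
  obtain ⟨B, hB⟩ := hφ.exists_testWeight_le
  have hz : Continuous fun s => (X s ω, Y s ω) := (hS.contX ω).prodMk (hS.contY ω)
  have hgrad := ((continuous_partialDerivs hφ.1).1.comp hz).aestronglyMeasurable
    (μ := volume.restrict (Set.Ioc 0 t))
  have hinner := (hS.aestronglyMeasurable_drift h t).inner (𝕜 := ℝ) hgrad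
  have hdiff : IntegrableOn (fun s => genSF C ε (P.map (X s)) φ (X s ω) (Y s ω) -
      ⟪C.b 0 (P.map (X s)) 0, gradient (fun x' => φ x' (Y s ω)) (X s ω)⟫) (Set.Ioc 0 t) := by
    refine Integrable.of_bound (hgen.aestronglyMeasurable.sub hinner) (|M| * B)
      ((ae_restrict_mem measurableSet_Ioc).mono fun s hs => ?_)
    refine (hM _ φ _ _ (hS.lawP2X s hs.1.le)).trans (mul_le_mul (le_abs_self M) (hB _ _)
      ?_ (abs_nonneg M))
    exact (norm_nonneg _).trans (norm_gradient_le_testWeight _ _ _)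
  exact (hgen.sub hdiff).congr (ae_of_all _ fun s => sub_sub_cancel _ _)

theorem not_integrableOn_genSF (hS : IsSFSolution C ε P ℱ X Y ξ ζ) (h : SA12 C)
    (hφ : TestFun2 φ) {ω : Ω} (hbefore : ∀ s < τ, DriftIntegrable C P X s)
    (hafter : ∀ s > τ, ¬IntegrableOn (fun r => C.b 0 (P.map (X r)) 0 i) (Set.Ioc 0 s))
    (hgrad : ∀ᶠ s in 𝓝 τ, gradient (fun x' => φ x' (Y s ω)) (X s ω) =
      EuclideanSpace.single i (1 : ℝ)) (ht : τ < t) :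
    ¬IntegrableOn (fun s => genSF C ε (P.map (X s)) φ (X s ω) (Y s ω)) (Set.Ioc 0 t) := by
  intro hgen
  have hcoord : ∀ s < τ, IntegrableOn (fun r => C.b 0 (P.map (X r)) 0 i) (Set.Ioc 0 s) :=
    fun s hs => (EuclideanSpace.proj i : Vec n →L[ℝ] ℝ).integrable_comp (hbefore s hs)
  obtain ⟨S, hS_gt, hint⟩ := exists_integrableOn_Ioc_of_eventuallyEq ht hcoord
    (hS.integrableOn_inner_drift h hφ hgen) (hgrad.mono fun s hs => by
      simp [hs, EuclideanSpace.inner_single_right])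
  exact hafter S hS_gt hint

theorem setIntegral_test_eq_of_integral_genSF_eq_zero (hS : IsSFSolution C ε P ℱ X Y ξ ζ)
    (hφ : TestFun2 φ) (hτ : 0 ≤ τ) {A : Set Ω} (hA : MeasurableSet[ℱ τ] A)
    (hzero : ∀ ω ∈ A, ∀ s > τ,
      ∫ r in Set.Ioc 0 s, genSF C ε (P.map (X r)) φ (X r ω) (Y r ω) = 0) (ht : τ < t) :
    ∫ ω in A, φ (X t ω) (Y t ω) ∂P = ∫ ω in A, φ (X τ ω) (Y τ ω) ∂P := by
  have hconst : ∀ s ∈ Set.Ioc τ t,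
      ∫ ω in A, φ (X t ω) (Y t ω) ∂P = ∫ ω in A, φ (X s ω) (Y s ω) ∂P := fun s hs => by
    rw [← sub_eq_zero, hS.setIntegral_test_sub hφ (hτ.trans hs.1.le) hs.2 (ℱ.mono hs.1.le _ hA)]
    refine setIntegral_eq_zero_of_forall_eq_zero fun ω hω => ?_
    rw [hzero ω hω t ht, hzero ω hω s hs.1, sub_zero]
  obtain ⟨B, hB⟩ := hφ.2.exists_bound_of_continuous hφ.1.continuous
  have hright : Tendsto (fun s => ∫ ω in A, φ (X s ω) (Y s ω) ∂P) (𝓝[>] τ)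
      (𝓝 (∫ ω in A, φ (X τ ω) (Y τ ω) ∂P)) :=
    tendsto_integral_filter_of_dominated_convergence (fun _ => B)
      (.of_forall fun s => (hS.integrable_test hφ s).aestronglyMeasurable.restrict)
      (.of_forall fun s => ae_of_all _ fun ω => hB (X s ω, Y s ω)) (integrable_const _)
      (ae_of_all _ fun ω => ((hφ.1.continuous.comp ((hS.contX ω).prodMk (hS.contY ω))).tendsto
        τ).mono_left nhdsWithin_le_nhds)
  refine tendsto_nhds_unique (tendsto_const_nhds.congr' ?_) hright
  filter_upwards [Ioc_mem_nhdsGT ht] with s hs using hconst s hs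

theorem integrable_bump (hS : IsSFSolution C ε P ℱ X Y ξ ζ) {q : Vec n × Vec m}
    (η : ContDiffBump q) (t : ℝ) : Integrable (fun ω => η (X t ω, Y t ω)) P :=
  hS.integrable_test (φ := fun x y => η (x, y)) ⟨η.contDiff, η.hasCompactSupport⟩ t

theorem setIntegral_bump_eq (hS : IsSFSolution C ε P ℱ X Y ξ ζ) (h : SA12 C) (hτ : 0 ≤ τ)
    (hbefore : ∀ s < τ, DriftIntegrable C P X s)
    (hafter : ∀ s > τ, ¬IntegrableOn (fun r => C.b 0 (P.map (X r)) 0 i) (Set.Ioc 0 s))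
    (ht : τ < t) {q : Vec n × Vec m} (η : ContDiffBump q) {A : Set Ω} (hA : MeasurableSet[ℱ τ] A)
    (hAη : ∀ ω ∈ A, (X τ ω, Y τ ω) ∈ Metric.ball q η.rIn) :
    ∫ ω in A, η (X t ω, Y t ω) ∂P = ∫ ω in A, η (X τ ω, Y τ ω) ∂P := by
  have hzero : ∀ a, ∀ ω ∈ A, ∀ s > τ, ∫ r in Set.Ioc 0 s,
      genSF C ε (P.map (X r)) (localCoord η i a) (X r ω) (Y r ω) = 0 := fun a ω hω s hs => by
    refine integral_undef (hS.not_integrableOn_genSF h (testFun2_localCoord η i a) hbefore hafter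
      ?_ hs)
    have hz : Continuous fun s => (X s ω, Y s ω) := (hS.contX ω).prodMk (hS.contY ω)
    filter_upwards [hz.continuousAt.eventually (Metric.isOpen_ball.mem_nhds (hAη ω hω))] with r hr
      using gradient_localCoord η i a hr
  have hφ_int : ∀ a s, IntegrableOn (fun ω => localCoord η i a (X s ω) (Y s ω)) A P :=
    fun a s => (hS.integrable_test (testFun2_localCoord η i a) s).integrableOn
  have hφ_eq := fun a => hS.setIntegral_test_eq_of_integral_genSF_eq_zero
    (testFun2_localCoord η i a) hτ hA (hzero a) ht
  simp_rw [← localCoord_one_sub_zero η i]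
  rw [integral_sub (hφ_int 1 t) (hφ_int 0 t), integral_sub (hφ_int 1 τ) (hφ_int 0 τ), hφ_eq,
    hφ_eq]

theorem ae_mem_ball_of_mem_ball (hS : IsSFSolution C ε P ℱ X Y ξ ζ) (h : SA12 C) (hτ : 0 ≤ τ)
    (hbefore : ∀ s < τ, DriftIntegrable C P X s)
    (hafter : ∀ s > τ, ¬IntegrableOn (fun r => C.b 0 (P.map (X r)) 0 i) (Set.Ioc 0 s))
    (ht : τ < t) {q : Vec n × Vec m} (η : ContDiffBump q) :
    ∀ᵐ ω ∂P, (X τ ω, Y τ ω) ∈ Metric.ball q η.rIn → (X t ω, Y t ω) ∈ Metric.ball q η.rOut := by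
  set A : Set Ω := {ω | (X τ ω, Y τ ω) ∈ Metric.ball q η.rIn}
  have hA : MeasurableSet[ℱ τ] A :=
    ((hS.adaptX τ).prodMk (hS.adaptY τ)) Metric.isOpen_ball.measurableSet
  have hη_one : ∫ ω in A, η (X τ ω, Y τ ω) ∂P = ∫ _ in A, (1 : ℝ) ∂P :=
    setIntegral_congr_fun (ℱ.le τ A hA) fun ω hω =>
      η.one_of_mem_closedBall (Metric.ball_subset_closedBall hω)
  have hη_int := (hS.integrable_bump η t).integrableOn (s := A)
  have hdefect : ∫ ω in A, (1 - η (X t ω, Y t ω)) ∂P = 0 := by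
    rw [integral_sub (integrable_const _) hη_int,
      hS.setIntegral_bump_eq h hτ hbefore hafter ht η hA fun ω hω => hω, hη_one, sub_self]
  rw [integral_eq_zero_iff_of_nonneg (fun ω => sub_nonneg.2 η.le_one)
    ((integrable_const _).sub hη_int)] at hdefect
  filter_upwards [(ae_restrict_iff' (ℱ.le τ A hA)).1 hdefect] with ω hω hmem
  rw [← η.support_eq]
  exact (zero_lt_one.trans_eq (sub_eq_zero.1 (hω hmem))).ne'

theorem ae_eq_of_not_driftIntegrable (hS : IsSFSolution C ε P ℱ X Y ξ ζ) (h : SA12 C)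
    (hτ : 0 ≤ τ) (hbefore : ∀ s < τ, DriftIntegrable C P X s)
    (hafter : ∀ s > τ, ¬DriftIntegrable C P X s) (ht : τ < t) : Y t =ᵐ[P] Y τ := by
  obtain ⟨i, hi⟩ := exists_coord_not_integrableOn hafter
  have hZ : (fun ω => (X t ω, Y t ω)) =ᵐ[P] fun ω => (X τ ω, Y τ ω) :=
    ae_eq_of_forall_mem_ball fun q r hr => hS.ae_mem_ball_of_mem_ball h hτ hbefore hi ht
      (⟨r, 2 * r, hr, by linarith⟩ : ContDiffBump q)
  exact hZ.mono fun ω hω => congrArg Prod.snd hω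

end IsSFSolution

namespace IsLyapunov

variable {n m d : ℕ} {C : Coeffs n m d} {ε : ℝ} {V : Vec m → ℝ} {κ A c : ℝ} {Ω : Type}
  [mΩ : MeasurableSpace Ω] {P : Measure Ω} [IsProbabilityMeasure P] {ℱ : Filtration ℝ mΩ}
  {X : ℝ → Ω → Vec n} {Y : ℝ → Ω → Vec m} {ξ : Ω → Vec n} {ζ : Ω → Vec m}

omit [IsProbabilityMeasure P] in
theorem integrable_and_integral_le_of_lt (hV : IsLyapunov C ε V κ A c)
    (hS : IsSFSolution C ε P ℱ X Y ξ ζ) {τ K : ℝ} (hτ : 0 < τ)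
    (h : ∀ s, 0 ≤ s → s < τ → Integrable (fun ω => V (Y s ω)) P ∧ ∫ ω, V (Y s ω) ∂P ≤ K) :
    Integrable (fun ω => V (Y τ ω)) P ∧ ∫ ω, V (Y τ ω) ∂P ≤ K := by
  obtain ⟨u, -, hu_mem, hu_lim⟩ := exists_seq_strictMono_tendsto' hτ
  have hu := fun k => h (u k) (hu_mem k).1.le (hu_mem k).2
  exact integrable_and_integral_le_of_tendsto (fun k => (hu k).1) (fun k ω => hV.nonneg _)
    (fun k => (hu k).2) (ae_of_all _ fun ω =>
      ((hV.contDiff.continuous.comp (hS.contY ω)).tendsto τ).comp hu_lim)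

theorem integrable_and_integral_le_of_nonneg (hV : IsLyapunov C ε V κ A c)
    (hS : IsSFSolution C ε P ℱ X Y ξ ζ) (h : SA12 C) (hε : 0 ≤ ε) {t K : ℝ} (ht : 0 ≤ t)
    (hi : Integrable (fun ω => V (Y 0 ω)) P) (hK0 : ∫ ω, V (Y 0 ω) ∂P ≤ K) (hK : A ≤ c * K) :
    Integrable (fun ω => V (Y t ω)) P ∧ ∫ ω, V (Y t ω) ∂P ≤ K := by
  have hgood : ∀ s, 0 ≤ s → DriftIntegrable C P X s → _ := fun s hs hds =>
    hV.integrable_and_integral_le hS h hε hs hds hi hK0 hK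
  by_cases htd : DriftIntegrable C P X t
  · exact hgood t ht htd
  set G : Set ℝ := {s | 0 ≤ s ∧ DriftIntegrable C P X s}
  have h0G : (0 : ℝ) ∈ G := ⟨le_rfl, by simp [DriftIntegrable]⟩
  have hGt : ∀ s ∈ G, s ≤ t := fun s hs => le_of_not_gt fun hts => htd (hs.2.mono hts.le)
  set τ := sSup G
  have hτ : 0 ≤ τ := le_csSup ⟨t, hGt⟩ h0G
  have hbefore : ∀ s < τ, DriftIntegrable C P X s := fun s hs => by
    obtain ⟨r, hr, hsr⟩ := exists_lt_of_lt_csSup ⟨0, h0G⟩ hs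
    exact hr.2.mono hsr.le
  have hafter : ∀ s > τ, ¬DriftIntegrable C P X s := fun s hs hds =>
    hs.not_ge (le_csSup ⟨t, hGt⟩ ⟨hτ.trans hs.le, hds⟩)
  have hτ_bound : Integrable (fun ω => V (Y τ ω)) P ∧ ∫ ω, V (Y τ ω) ∂P ≤ K := by
    rcases hτ.eq_or_lt with hτ0 | hτ_pos
    · rw [← hτ0]
      exact ⟨hi, hK0⟩
    · exact hV.integrable_and_integral_le_of_lt hS hτ_pos fun s hs hsτ =>
        hgood s hs (hbefore s hsτ)
  rcases (csSup_le ⟨0, h0G⟩ hGt).eq_or_lt with hτt | hτt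
  · rwa [← hτt]
  · have hfreeze : (fun ω => V (Y τ ω)) =ᵐ[P] fun ω => V (Y t ω) :=
      (hS.ae_eq_of_not_driftIntegrable h hτ hbefore hafter hτt).mono fun ω hω =>
        congrArg V hω.symm
    exact ⟨hτ_bound.1.congr hfreeze, (integral_congr_ae hfreeze).symm.trans_le hτ_bound.2⟩

end IsLyapunov

namespace IsSFSolution

variable {n m d : ℕ} {C : Coeffs n m d} {ε : ℝ} {Ω : Type} [mΩ : MeasurableSpace Ω]
  {P : Measure Ω} {ℱ : Filtration ℝ mΩ} {X : ℝ → Ω → Vec n} {Y : ℝ → Ω → Vec m} {ξ : Ω → Vec n}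
  {ζ : Ω → Vec m} {p : ℝ}

theorem integrable_norm_rpow_init (hS : IsSFSolution C ε P ℱ X Y ξ ζ) (hp : 0 ≤ p)
    (hζ : ∫⁻ ω, ‖ζ ω‖ₑ ^ p ∂P < ⊤) : Integrable (fun ω => ‖ζ ω‖ ^ p) P := by
  have hζ_meas : AEStronglyMeasurable ζ P := (hS.measY 0).aestronglyMeasurable.congr hS.initY
  refine ⟨(hζ_meas.norm.aemeasurable.pow_const p).aestronglyMeasurable, ?_⟩
  rw [hasFiniteIntegral_iff_enorm]
  simpa only [Real.enorm_rpow_of_nonneg (norm_nonneg _) hp, enorm_norm] using hζ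

theorem integrable_and_integral_lyapunov_init_le [IsProbabilityMeasure P]
    (hS : IsSFSolution C ε P ℱ X Y ξ ζ) (hp : 0 ≤ p) (hζ : Integrable (fun ω => ‖ζ ω‖ ^ p) P) :
    Integrable (fun ω => lyapunov p (Y 0 ω)) P ∧
      ∫ ω, lyapunov p (Y 0 ω) ∂P ≤ 2 ^ p * (1 + ∫ ω, ‖ζ ω‖ ^ p ∂P) := by
  have hle : ∀ᵐ ω ∂P, lyapunov p (Y 0 ω) ≤ 2 ^ p * (1 + ‖ζ ω‖ ^ p) :=
    hS.initY.mono fun ω hω => hω ▸ lyapunov_le hp _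
  have hbound : Integrable (fun ω => 2 ^ p * (1 + ‖ζ ω‖ ^ p)) P :=
    ((integrable_const 1).add hζ).const_mul _
  have hi : Integrable (fun ω => lyapunov p (Y 0 ω)) P :=
    hbound.mono' ((contDiff_lyapunov p).continuous.comp_aestronglyMeasurable
      (hS.measY 0).aestronglyMeasurable) (hle.mono fun ω hω => by
        rwa [Real.norm_of_nonneg (lyapunov_nonneg p _)])
  refine ⟨hi, (integral_mono_ae hi hbound hle).trans_eq ?_⟩
  rw [integral_const_mul, integral_add (integrable_const 1) hζ]
  simp

end IsSFSolution

theorem uniform_moment_estimate_fast_general {n m d : ℕ} {C : Coeffs n m d} (h : SA12 C) {p : ℝ}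
    (hp : 0 < p) :
    ∃ Cp > (0 : ℝ), ∃ ε₀ ∈ Set.Ioc (0 : ℝ) 1, ∀ ε ∈ Set.Ioo (0 : ℝ) ε₀,
      ∀ {Ω : Type} [mΩ : MeasurableSpace Ω] (P : Measure Ω) [IsProbabilityMeasure P]
        (ℱ : Filtration ℝ mΩ) (X : ℝ → Ω → Vec n) (Y : ℝ → Ω → Vec m) (ξ : Ω → Vec n)
        (ζ : Ω → Vec m), IsSFSolution C ε P ℱ X Y ξ ζ → ∫⁻ ω, ‖ζ ω‖ₑ ^ p ∂P < ⊤ → ∀ t, 0 ≤ t →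
      Integrable (fun ω => ‖Y t ω‖ ^ p) P ∧
        ∫ ω, ‖Y t ω‖ ^ p ∂P ≤ Cp * (1 + ∫ ω, ‖ζ ω‖ ^ p ∂P) := by
  obtain ⟨A, c, δ, hδ, hV⟩ := h.exists_isLyapunov hp
  have hVδ := hV (δ ^ 2) (by positivity) (Real.sqrt_sq hδ.le).le
  have hA := hVδ.const_nonneg
  have hc := hVδ.decay_pos
  refine ⟨2 ^ p + A / c, by positivity, min 1 (δ ^ 2), ⟨by positivity, min_le_left _ _⟩, ?_⟩
  intro ε hε Ω _ P _ ℱ X Y ξ ζ hS hζ t ht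
  have hVε := hV ε hε.1 (Real.sqrt_le_iff.2 ⟨hδ.le, hε.2.le.trans (min_le_right _ _)⟩)
  have hζ_int := hS.integrable_norm_rpow_init hp.le hζ
  obtain ⟨hi, hinit⟩ := hS.integrable_and_integral_lyapunov_init_le hp.le hζ_int
  have hI : 0 ≤ ∫ ω, ‖ζ ω‖ ^ p ∂P := integral_nonneg fun ω => by positivity
  have hK0 : ∫ ω, lyapunov p (Y 0 ω) ∂P ≤ (2 ^ p + A / c) * (1 + ∫ ω, ‖ζ ω‖ ^ p ∂P) :=
    hinit.trans (by gcongr; exact le_add_of_nonneg_right (by positivity))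
  have hK : A ≤ c * ((2 ^ p + A / c) * (1 + ∫ ω, ‖ζ ω‖ ^ p ∂P)) := by
    calc A = c * ((0 + A / c) * (1 + 0)) := by field_simp; ring
      _ ≤ _ := by gcongr; positivity
  obtain ⟨hi_t, hbound⟩ := hVε.integrable_and_integral_le_of_nonneg hS h hε.1.le ht hi hK0 hK
  have hY_int : Integrable (fun ω => ‖Y t ω‖ ^ p) P :=
    hi_t.mono' ((hS.measY t).norm.pow_const p).aestronglyMeasurable (ae_of_all _ fun ω => by
      rw [Real.norm_of_nonneg (by positivity)]
      exact norm_rpow_le_lyapunov hp.le _)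
  exact ⟨hY_int, (integral_mono hY_int hi_t fun ω => norm_rpow_le_lyapunov hp.le _).trans hbound⟩

/-- **Estimate (3.11).** Under conditions A1–A3, for any `p ≥ 2` there is `C_p > 0` such
that for all sufficiently small `ε > 0`, `sup_{t ≥ 0} E|Y^ε_t|ᵖ ≤ C_p (1 + E|ζ|ᵖ)`. -/
theorem uniform_moment_estimate_fast {n m d : ℕ} (C : Coeffs n m d) (SAh : SA13 C)
    {Ω : Type} [mΩ : MeasurableSpace Ω] (P : Measure Ω) (hP : IsProbabilityMeasure P)
    (ℱ : Filtration ℝ mΩ) (X : ℝ → ℝ → Ω → Vec n) (Y : ℝ → ℝ → Ω → Vec m)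
    (ξ : Ω → Vec n) (ζ : Ω → Vec m)
    (hsol : ∀ ε ∈ Set.Ioo (0 : ℝ) 1, IsSFSolution C ε P ℱ (X ε) (Y ε) ξ ζ)
    (p : ℝ) (hp : 2 ≤ p) (hmom : (∫⁻ ω, (‖ζ ω‖₊ : ℝ≥0∞) ^ p ∂P) < ⊤) :
    ∃ Cp > (0 : ℝ), ∃ ε₀ ∈ Set.Ioc (0 : ℝ) 1, ∀ ε ∈ Set.Ioo (0 : ℝ) ε₀, ∀ t : ℝ, 0 ≤ t →
      ∫ ω, ‖Y ε t ω‖ ^ p ∂P ≤ Cp * (1 + ∫ ω, ‖ζ ω‖ ^ p ∂P) := by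
  obtain ⟨Cp, hCp, ε₀, hε₀, hbound⟩ := uniform_moment_estimate_fast_general SAh.toSA12
    (zero_lt_two.trans_le hp)
  exact ⟨Cp, hCp, ε₀, hε₀, fun ε hε t ht => (hbound ε hε P ℱ (X ε) (Y ε) ξ ζ
    (hsol ε ⟨hε.1, hε.2.trans_le hε₀.2⟩) hmom t ht).2⟩

end DiffApprox
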